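/- Consider the uncoupled system of four pendula ẍ_i + sin x_i = 0, i = 1, …, 4. Let q, p ∈ ℝ⁴ be such that for each i the pair (α, β) = (q_i, p_i) satisfies one of the admissibility conditions of the Pendulum Lemma (namely: |α| ≤ 1 and |β − π| < 1; or |α + π| ≤ 1 and |β| ≤ 1; or |α| ≤ 1 and |β − 2π| ≤ 1; or β − α ≥ 2π). Then for every T > 0 there is a unique solution X(t; T, q, p) of the uncoupled system with X(0) = q and X(T) = p whose i-th component satisfies the corresponding confinement of the Pendulum Lemma; moreover, there is a unique T* = T*(q,p) > 0 such that the total energy Σ_{i=1}^{4} [Ẋ_i²/2 + (−cos X_i − 1)] of this solution equals 1, and T* depends smoothly on (q, p). -/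

import Mathlib

/-- The pendulum potential `V(x) = −cos x − 1`. -/
noncomputable def Vpend (x : ℝ) : ℝ := -Real.cos x - 1

/-- `IsPendSolOn x v s` : on the set `s`, `x` solves the pendulum equation
`ẍ + sin x = 0`, with velocity `v`. -/
def IsPendSolOn (x v : ℝ → ℝ) (s : Set ℝ) : Prop :=
  ∀ t ∈ s, HasDerivAt x (v t) t ∧ HasDerivAt v (-Real.sin (x t)) t

/-- The four admissibility cases of the Pendulum Lemma for boundary values `(α, β)`. -/
def AdmissCase (k : Fin 4) (α β : ℝ) : Prop :=
  if k = 0 then |α| ≤ 1 ∧ |β - Real.pi| < 1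
  else if k = 1 then |α + Real.pi| ≤ 1 ∧ |β| ≤ 1
  else if k = 2 then |α| ≤ 1 ∧ |β - 2 * Real.pi| ≤ 1
  else 2 * Real.pi ≤ β - α

/-- The corresponding confinement interval of the Pendulum Lemma. -/
noncomputable def ConfineSet (k : Fin 4) (α β : ℝ) : Set ℝ :=
  if k = 0 then Set.Icc α (max β Real.pi)
  else if k = 1 then Set.Icc (-1 - Real.pi) 1
  else if k = 2 then Set.Icc (-1) (2 * Real.pi + 1)
  else Set.Icc α β


section PendProof
open Real Set Filter Topology

/-- pendulum vector field -/
noncomputable def pField (z : ℝ × ℝ) : ℝ × ℝ := (z.2, -Real.sin z.1)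

lemma pField_lip : LipschitzWith 1 pField := by
  apply LipschitzWith.of_dist_le_mul
  intro a b
  simp only [NNReal.coe_one, one_mul, pField, Prod.dist_eq, dist_neg_neg]
  apply max_le (le_max_right _ _)
  refine le_trans ?_ (le_max_left _ _)
  simpa using Real.lipschitzWith_sin.dist_le_mul a.1 b.1

lemma pField_contDiff : ContDiff ℝ 1 pField := by
  unfold pField; fun_prop

open scoped Manifold ContDiff in
lemma exists_flow (z : ℝ × ℝ) : ∃ γ : ℝ → ℝ × ℝ, γ 0 = z ∧ ∀ t, HasDerivAt γ (pField (γ t)) t := by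
  have key : ∃ γ : ℝ → ℝ × ℝ, γ 0 = z ∧ IsMIntegralCurve (I := 𝓘(ℝ, ℝ × ℝ)) γ (fun z => pField z) := by
    apply exists_isMIntegralCurve_of_isMIntegralCurveOn (ε := 1/2)
    · exact contMDiff_vectorSpace_iff_contDiff.mpr pField_contDiff
    · norm_num
    · intro x
      have hpl : IsPicardLindelof (fun _ => pField) (tmin := -(1/2)) (tmax := 1/2) ⟨0, by norm_num, by norm_num⟩ x
          ‖pField x‖₊ 0 (2 * ‖pField x‖₊) 1 := by
        apply IsPicardLindelof.of_time_independent
        · intro y hy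
          have h1 := pField_lip.dist_le_mul y x
          rw [dist_eq_norm] at h1
          rw [mem_closedBall_iff_norm] at hy
          simp only [coe_nnnorm, NNReal.coe_one, one_mul, dist_eq_norm] at h1 hy
          have := norm_le_norm_add_norm_sub' (pField y) (pField x)
          simp only [NNReal.coe_mul, NNReal.coe_ofNat, coe_nnnorm]
          linarith
        · exact pField_lip.lipschitzOnWith
        · simp; linarith
      obtain ⟨γ, h0, h⟩ := hpl.exists_eq_forall_mem_Icc_hasDerivWithinAt₀
      refine ⟨γ, h0, ?_⟩
      intro t ht
      have := (h t ⟨ht.1.le, ht.2.le⟩).mono Ioo_subset_Icc_self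
      exact this.hasFDerivWithinAt.hasMFDerivWithinAt
    
  obtain ⟨γ, h0, h⟩ := key
  refine ⟨γ, h0, fun t => ?_⟩
  have := (h t).hasFDerivAt
  exact this
  
/-- the global flow -/
noncomputable def Fl (z : ℝ × ℝ) (t : ℝ) : ℝ × ℝ := Classical.choose (exists_flow z) t

lemma Fl_zero (z) : Fl z 0 = z := (Classical.choose_spec (exists_flow z)).1
lemma Fl_deriv (z) (t : ℝ) : HasDerivAt (Fl z) (pField (Fl z t)) t :=
  (Classical.choose_spec (exists_flow z)).2 t

lemma Fl_unique (γ : ℝ → ℝ × ℝ) (h : ∀ t, HasDerivAt γ (pField (γ t)) t) (t : ℝ) :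
    γ t = Fl (γ 0) t := by
  have := ODE_solution_unique_univ (v := fun _ => pField) (s := fun _ => univ) (K := 1) (t₀ := 0)
    (f := γ) (g := Fl (γ 0)) (fun _ => pField_lip.lipschitzOnWith)
    (fun t => ⟨h t, trivial⟩) (fun t => ⟨Fl_deriv _ t, trivial⟩) (Fl_zero _).symm
  exact congrFun this t

lemma Fl_add (z) (s t : ℝ) : Fl z (s + t) = Fl (Fl z s) t := by
  have := Fl_unique (fun t => Fl z (s + t)) (fun t => by
    simpa using (Fl_deriv z (s + t)).comp_const_add s t) t
  simpa using this

lemma Fl_unique_Icc {x v : ℝ → ℝ} {T : ℝ} (h : IsPendSolOn x v (Icc 0 T)) {t : ℝ} (ht : t ∈ Icc 0 T) :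
    (x t, v t) = Fl (x 0, v 0) t := by
  have h' : ∀ t ∈ Icc 0 T, HasDerivAt (fun t => (x t, v t)) (pField (x t, v t)) t :=
    fun t ht => (h t ht).1.prodMk (h t ht).2
  have := ODE_solution_unique (v := fun _ => pField) (K := 1) (a := 0) (b := T)
    (f := fun t => (x t, v t)) (g := Fl (x 0, v 0)) (fun _ => pField_lip)
    (fun t ht => (h' t ht).continuousAt.continuousWithinAt)
    (fun t ht => (h' t ⟨ht.1, ht.2.le⟩).hasDerivWithinAt)
    (fun t ht => (Fl_deriv _ t).continuousAt.continuousWithinAt)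
    (fun t ht => (Fl_deriv _ t).hasDerivWithinAt) (Fl_zero _).symm
  exact this ht


/-- path space -/
abbrev PB := C(unitInterval, ℝ)

noncomputable def PJfun (w : PB) : PB where
  toFun s := ∫ r in (0:ℝ)..s, Set.IccExtend (zero_le_one' ℝ) w r
  continuous_toFun := by
    have h : Continuous fun s : ℝ => ∫ r in (0:ℝ)..s, Set.IccExtend (zero_le_one' ℝ) w r :=
      intervalIntegral.continuous_primitive (fun a b => (w.continuous.Icc_extend').intervalIntegrable a b) 0
    exact h.comp continuous_subtype_val

lemma PJ_cont (w : PB) : Continuous (Set.IccExtend (zero_le_one' ℝ) w) := w.continuous.Icc_extend'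

/-- integration operator -/
noncomputable def PJ : PB →L[ℝ] PB :=
  LinearMap.mkContinuous
    { toFun := PJfun
      map_add' := by
        intro w w'
        ext s
        simp only [PJfun, ContinuousMap.coe_mk, ContinuousMap.add_apply]
        rw [← intervalIntegral.integral_add ((PJ_cont w).intervalIntegrable _ _) ((PJ_cont w').intervalIntegrable _ _)]
        rfl
      map_smul' := by
        intro c w
        ext s
        simp only [PJfun, ContinuousMap.coe_mk, ContinuousMap.smul_apply, RingHom.id_apply]
        rw [← intervalIntegral.integral_smul]
        rfl } 1 (by
    intro w
    rw [one_mul]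
    rw [ContinuousMap.norm_le _ (norm_nonneg _)]
    intro s
    have := intervalIntegral.norm_integral_le_of_norm_le_const (a := 0) (b := (s:ℝ)) (C := ‖w‖)
      (f := Set.IccExtend (zero_le_one' ℝ) w) (fun x _ => w.norm_coe_le_norm _)
    refine le_trans this ?_
    have h1 : |(s:ℝ) - 0| ≤ 1 := by
      rw [sub_zero, abs_of_nonneg s.2.1]; exact s.2.2
    nlinarith [norm_nonneg w])

lemma PJ_norm (w : PB) : ‖PJ w‖ ≤ ‖w‖ := by
  have : ‖PJ‖ ≤ 1 := LinearMap.mkContinuous_norm_le _ zero_le_one _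
  calc ‖PJ w‖ ≤ ‖PJ‖ * ‖w‖ := PJ.le_opNorm w
    _ ≤ 1 * ‖w‖ := by gcongr
    _ = ‖w‖ := one_mul _

lemma PJ_apply (w : PB) (s : unitInterval) :
    PJ w s = ∫ r in (0:ℝ)..s, Set.IccExtend (zero_le_one' ℝ) w r := rfl

/-- multiplication operator -/
noncomputable def PMul : PB →L[ℝ] PB →L[ℝ] PB := ContinuousLinearMap.mul ℝ PB

lemma PMul_apply (x y : PB) : PMul x y = x * y := rfl

lemma PMul_contDiff (n : ℕ) : ContDiff ℝ n (fun x : PB => PMul x) :=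
  by fun_prop

noncomputable def PSin (x : PB) : PB := ⟨fun s => Real.sin (x s), by fun_prop⟩
noncomputable def PCos (x : PB) : PB := ⟨fun s => Real.cos (x s), by fun_prop⟩

lemma sin_taylor1 (x h : ℝ) : |Real.sin (x + h) - Real.sin x - Real.cos x * h| ≤ 3 * h ^ 2 := by
  have h1 : |Real.sin h - h| ≤ 2 * h^2 := by
    have pos : ∀ h : ℝ, 0 < h → |Real.sin h - h| ≤ 2 * h^2 := by
      intro h hh
      rw [abs_of_nonpos (by linarith [Real.sin_lt hh])]
      rcases le_or_gt h 1 with h1 | h1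
      · have := Real.sin_gt_sub_cube hh
        nlinarith [pow_pos hh 2]
      · nlinarith [Real.neg_one_le_sin h]
    rcases lt_trichotomy h 0 with hh | hh | hh
    · have := pos (-h) (by linarith)
      rw [Real.sin_neg, ← abs_neg] at this
      convert this using 2 <;> ring
    · subst hh; simp
    · exact pos h hh
  have h2 : |Real.cos h - 1| ≤ h^2/2 := by
    rw [abs_le]; constructor
    · linarith [Real.one_sub_sq_div_two_le_cos (x := h)]
    · linarith [Real.cos_le_one h, sq_nonneg h]
  rw [Real.sin_add]
  have : Real.sin x * Real.cos h + Real.cos x * Real.sin h - Real.sin x - Real.cos x * h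
    = Real.sin x * (Real.cos h - 1) + Real.cos x * (Real.sin h - h) := by ring
  rw [this]
  refine (abs_add_le _ _).trans ?_
  rw [abs_mul, abs_mul]
  have := Real.abs_sin_le_one x
  have := Real.abs_cos_le_one x
  nlinarith [abs_nonneg (Real.cos h - 1), abs_nonneg (Real.sin h - h)]

lemma cos_taylor1 (x h : ℝ) : |Real.cos (x + h) - Real.cos x - (-Real.sin x) * h| ≤ 3 * h ^ 2 := by
  have := sin_taylor1 (x + π/2) h
  rw [show x + π/2 + h = (x + h) + π/2 by ring, Real.sin_add_pi_div_two, Real.sin_add_pi_div_two,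
    Real.cos_add_pi_div_two] at this
  exact this

lemma hasFDerivAt_of_sq {f : PB → PB} {f' : PB →L[ℝ] PB} {x : PB}
    (h : ∀ k : PB, ‖f (x + k) - f x - f' k‖ ≤ 3 * ‖k‖ ^ 2) : HasFDerivAt f f' x := by
  rw [hasFDerivAt_iff_isLittleO_nhds_zero]
  have h1 : (fun k => f (x + k) - f x - f' k) =O[𝓝 0] (fun k : PB => ‖k‖ ^ 2) :=
    Asymptotics.IsBigO.of_bound 3 (Eventually.of_forall fun k => by simpa using h k)
  refine h1.trans_isLittleO ?_
  exact Asymptotics.isLittleO_norm_pow_id one_lt_two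

lemma PSin_deriv (x : PB) : HasFDerivAt PSin (PMul (PCos x)) x := by
  apply hasFDerivAt_of_sq
  intro k
  rw [ContinuousMap.norm_le _ (by positivity)]
  intro s
  refine (sin_taylor1 (x s) (k s)).trans ?_
  have := k.norm_coe_le_norm s
  rw [Real.norm_eq_abs] at this
  rw [← sq_abs]
  gcongr

lemma PCos_deriv (x : PB) : HasFDerivAt PCos (PMul (-PSin x)) x := by
  apply hasFDerivAt_of_sq
  intro k
  rw [ContinuousMap.norm_le _ (by positivity)]
  intro s
  refine (cos_taylor1 (x s) (k s)).trans ?_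
  have := k.norm_coe_le_norm s
  rw [Real.norm_eq_abs] at this
  rw [← sq_abs]
  gcongr

lemma PSin_PCos_contDiff (n : ℕ) : ContDiff ℝ n PSin ∧ ContDiff ℝ n PCos := by
  induction n with
  | zero =>
    constructor
    · exact contDiff_zero.mpr (continuous_iff_continuousAt.mpr fun x => (PSin_deriv x).continuousAt)
    · exact contDiff_zero.mpr (continuous_iff_continuousAt.mpr fun x => (PCos_deriv x).continuousAt)
  | succ n ih =>
    constructor
    · push_cast
      rw [contDiff_succ_iff_hasFDerivAt]
      refine ⟨fun x => PMul (PCos x), (PMul_contDiff n).comp (f := PCos) ih.2, fun x => PSin_deriv x⟩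
    · push_cast
      rw [contDiff_succ_iff_hasFDerivAt]
      refine ⟨fun x => PMul (-PSin x), (PMul_contDiff n).comp (f := fun x => -PSin x) ih.1.neg, fun x => PCos_deriv x⟩

lemma PSin_contDiff : ContDiff ℝ (⊤ : ℕ∞) PSin := contDiff_infty.mpr fun n => (PSin_PCos_contDiff n).1

/-- the implicit equation -/
noncomputable def PG (u : (ℝ × ℝ × ℝ) × (PB × PB)) : PB × PB :=
  (u.2.1 - u.1.2.1 • (1 : PB) - u.1.1 • PJ u.2.2, u.2.2 - u.1.2.2 • (1:PB) + u.1.1 • PJ (PSin u.2.1))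

lemma PG_contDiff : ContDiff ℝ (⊤ : ℕ∞) PG := by
  have h1 : ContDiff ℝ (⊤ : ℕ∞) (fun u : (ℝ × ℝ × ℝ) × (PB × PB) => PJ u.2.2) :=
    PJ.contDiff.comp (by fun_prop)
  have h2 : ContDiff ℝ (⊤ : ℕ∞) (fun u : (ℝ × ℝ × ℝ) × (PB × PB) => PJ (PSin u.2.1)) :=
    PJ.contDiff.comp (PSin_contDiff.comp (by fun_prop))
  unfold PG
  fun_prop

lemma PSin_lip (x y : PB) : ‖PSin x - PSin y‖ ≤ ‖x - y‖ := by
  rw [ContinuousMap.norm_le _ (norm_nonneg _)]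
  intro s
  have h1 : ‖Real.sin (x s) - Real.sin (y s)‖ ≤ ‖x s - y s‖ := by
    simpa [dist_eq_norm] using Real.lipschitzWith_sin.dist_le_mul (x s) (y s)
  exact h1.trans ((x - y).norm_coe_le_norm s)

lemma PG_unique {p : ℝ × ℝ × ℝ} (hp : |p.1| < 1) {z z' : PB × PB} (h : PG (p, z) = 0) (h' : PG (p, z') = 0) :
    z = z' := by
  have e1 : z.1 - z'.1 = p.1 • PJ (z.2 - z'.2) := by
    have := congrArg Prod.fst (h.trans h'.symm)
    simp only [PG] at this
    rw [map_sub, smul_sub]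
    linear_combination this
  have e2 : z.2 - z'.2 = - (p.1 • PJ (PSin z.1 - PSin z'.1)) := by
    have := congrArg Prod.snd (h.trans h'.symm)
    simp only [PG] at this
    rw [map_sub, smul_sub]
    linear_combination this
  have n1 : ‖z.1 - z'.1‖ ≤ |p.1| * ‖z.2 - z'.2‖ := by
    rw [e1, norm_smul, Real.norm_eq_abs]
    gcongr
    exact PJ_norm _
  have n2 : ‖z.2 - z'.2‖ ≤ |p.1| * ‖z.1 - z'.1‖ := by
    rw [e2, norm_neg, norm_smul, Real.norm_eq_abs]
    gcongr
    exact (PJ_norm _).trans (PSin_lip _ _)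
  have a0 := norm_nonneg (z.1 - z'.1)
  have b0 := norm_nonneg (z.2 - z'.2)
  have b1 : ‖z.2 - z'.2‖ = 0 := by nlinarith [abs_nonneg p.1]
  have a1 : ‖z.1 - z'.1‖ = 0 := by rw [b1] at n1; linarith
  exact Prod.ext (sub_eq_zero.mp (norm_eq_zero.mp a1)) (sub_eq_zero.mp (norm_eq_zero.mp b1))

lemma PG_invertible {p : ℝ × ℝ × ℝ} (hp : |p.1| < 1) (z : PB × PB) :
    (fderiv ℝ PG (p, z) ∘L .inr ℝ (ℝ × ℝ × ℝ) (PB × PB)).IsInvertible := by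
  set L : (PB × PB) →L[ℝ] (PB × PB) :=
    (p.1 • PJ ∘L (ContinuousLinearMap.snd ℝ PB PB)).prod
      (-(p.1 • PJ ∘L (PMul (PCos z.1)) ∘L (ContinuousLinearMap.fst ℝ PB PB))) with hL
  have hLn : ‖L‖ < 1 := by
    refine lt_of_le_of_lt (ContinuousLinearMap.opNorm_le_bound _ (abs_nonneg p.1) ?_) hp
    intro k
    rw [hL]
    rw [ContinuousLinearMap.prod_apply, Prod.norm_def]
    apply max_le
    · simp only [smul_apply, ContinuousLinearMap.comp_apply, ContinuousLinearMap.coe_snd', norm_smul, Real.norm_eq_abs]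
      gcongr
      exact (PJ_norm _).trans (norm_snd_le k)
    · simp only [neg_apply, norm_neg, smul_apply, ContinuousLinearMap.comp_apply, ContinuousLinearMap.coe_fst', norm_smul, Real.norm_eq_abs]
      gcongr
      refine (PJ_norm _).trans ?_
      have : ‖PCos z.1‖ ≤ 1 := by
        rw [ContinuousMap.norm_le _ zero_le_one]
        intro s
        exact Real.abs_cos_le_one _
      calc ‖PCos z.1 * k.1‖ ≤ ‖PCos z.1‖ * ‖k.1‖ := norm_mul_le _ _
        _ ≤ 1 * ‖k‖ := by
          gcongr
          exact norm_fst_le k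
        _ = ‖k‖ := one_mul _
  have h1 : HasFDerivAt (fun z' => PG (p, z')) (1 - L) z := by
    have d1 : HasFDerivAt (fun z' : PB × PB => z'.1 - p.2.1 • (1 : PB) - p.1 • PJ z'.2)
       (ContinuousLinearMap.fst ℝ PB PB - p.1 • PJ ∘L (ContinuousLinearMap.snd ℝ PB PB)) z := by
      refine (hasFDerivAt_fst.sub_const _).sub ?_
      exact ((PJ.hasFDerivAt.comp z hasFDerivAt_snd).const_smul p.1)
    have d2 : HasFDerivAt (fun z' : PB × PB => z'.2 - p.2.2 • (1 : PB) + p.1 • PJ (PSin z'.1))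
       (ContinuousLinearMap.snd ℝ PB PB + p.1 • PJ ∘L (PMul (PCos z.1)) ∘L (ContinuousLinearMap.fst ℝ PB PB)) z := by
      refine (hasFDerivAt_snd.sub_const _).add ?_
      exact ((PJ.hasFDerivAt.comp z ((PSin_deriv z.1).comp z hasFDerivAt_fst)).const_smul p.1)
    have d3 := d1.prodMk d2
    have e : 1 - L = (ContinuousLinearMap.fst ℝ PB PB - p.1 • PJ ∘L (ContinuousLinearMap.snd ℝ PB PB)).prod
       (ContinuousLinearMap.snd ℝ PB PB + p.1 • PJ ∘L (PMul (PCos z.1)) ∘L (ContinuousLinearMap.fst ℝ PB PB)) := by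
      apply ContinuousLinearMap.ext
      intro k
      apply Prod.ext <;> simp [hL]
    rw [e]
    exact d3
  have h2 : HasFDerivAt (fun z' => PG (p, z')) (fderiv ℝ PG (p, z) ∘L .inr ℝ (ℝ × ℝ × ℝ) (PB × PB)) z := by
    have : HasFDerivAt PG (fderiv ℝ PG (p, z)) (p, z) :=
      (PG_contDiff.differentiable (by simp)).differentiableAt.hasFDerivAt
    exact this.comp z (hasFDerivAt_prodMk_right p z)
  rw [h2.unique h1]
  obtain ⟨u, hu⟩ := isUnit_one_sub_of_norm_lt_one (R := (PB × PB) →L[ℝ] (PB × PB)) (x := L) hLn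
  rw [← hu]
  exact ⟨ContinuousLinearEquiv.ofUnit u, rfl⟩

lemma Fl_continuous (z) : Continuous (Fl z) :=
  continuous_iff_continuousAt.mpr fun t => (Fl_deriv z t).continuousAt

lemma Fl_fst_deriv (z) (t : ℝ) : HasDerivAt (fun t => (Fl z t).1) (Fl z t).2 t :=
  (Fl_deriv z t).fst
lemma Fl_snd_deriv (z) (t : ℝ) : HasDerivAt (fun t => (Fl z t).2) (-Real.sin (Fl z t).1) t :=
  (Fl_deriv z t).snd

/-- rescaled flow path -/
noncomputable def PP (p : ℝ × ℝ × ℝ) : PB × PB :=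
  (⟨fun s => (Fl p.2 (s * p.1)).1, by have := Fl_continuous p.2; fun_prop⟩,
   ⟨fun s => (Fl p.2 (s * p.1)).2, by have := Fl_continuous p.2; fun_prop⟩)

lemma PG_PP (p : ℝ × ℝ × ℝ) : PG (p, PP p) = 0 := by
  have hc := Fl_continuous p.2
  have key : ∀ f g : ℝ → ℝ, (∀ t, HasDerivAt f (g t) t) → Continuous g → ∀ s : unitInterval,
      p.1 * ∫ r in (0:ℝ)..s, Set.IccExtend (zero_le_one' ℝ) (fun s' : unitInterval => g (s' * p.1)) r
       = f (s * p.1) - f 0 := by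
    intro f g hf hg s
    have h1 : ∫ r in (0:ℝ)..s, Set.IccExtend (zero_le_one' ℝ) (fun s' : unitInterval => g (s' * p.1)) r
       = ∫ r in (0:ℝ)..s, g (r * p.1) := by
      apply intervalIntegral.integral_congr
      intro r hr
      rw [uIcc_of_le s.2.1] at hr
      simp only
      rw [Set.IccExtend_of_mem _ _ ⟨hr.1, hr.2.trans s.2.2⟩]
    rw [h1, ← intervalIntegral.integral_const_mul]
    have := intervalIntegral.integral_eq_sub_of_hasDerivAt (a := 0) (b := (s:ℝ)) (f := fun r => f (r * p.1))
      (f' := fun r => p.1 * g (r * p.1)) (fun r _ => by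
        have := (hf (r * p.1)).comp r ((hasDerivAt_id r).mul_const p.1)
        rw [show p.1 * g (r * p.1) = g (r * p.1) * (1 * p.1) by ring]; exact this) (by apply Continuous.intervalIntegrable; fun_prop)
    simpa using this
  apply Prod.ext
  · ext s
    have := key _ _ (Fl_fst_deriv p.2) (by fun_prop) s
    simp only [PG, PP, ContinuousMap.coe_sub, Pi.sub_apply, ContinuousMap.coe_mk, ContinuousMap.coe_smul, Pi.smul_apply, smul_eq_mul, PJ_apply, ContinuousMap.coe_one, Pi.one_apply, mul_one, Prod.fst_zero, ContinuousMap.zero_apply]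
    rw [this]
    simp [Fl_zero]
  · ext s
    have := key _ _ (Fl_snd_deriv p.2) (by fun_prop) s
    simp only [PG, PP, ContinuousMap.coe_sub, ContinuousMap.coe_add, Pi.add_apply, Pi.sub_apply, ContinuousMap.coe_mk, ContinuousMap.coe_smul, Pi.smul_apply, smul_eq_mul, PJ_apply, ContinuousMap.coe_one, Pi.one_apply, mul_one, Prod.snd_zero, ContinuousMap.zero_apply, PSin]
    have e2 : (Set.IccExtend (zero_le_one' ℝ) (fun s' : unitInterval => -Real.sin (Fl p.2 (s' * p.1)).1)) =
      fun r => - (Set.IccExtend (zero_le_one' ℝ) (fun s' : unitInterval => Real.sin (Fl p.2 (s' * p.1)).1)) r := rfl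
    rw [e2, intervalIntegral.integral_neg] at this
    simp only [Fl_zero] at this
    linarith

lemma Fl_contDiffAt_small {p : ℝ × ℝ × ℝ} (hp : |p.1| < 1) :
    ContDiffAt ℝ (⊤ : ℕ∞) (fun p : ℝ × ℝ × ℝ => Fl p.2 p.1) p := by
  have cd : ContDiffAt ℝ (⊤ : ℕ∞) PG (p, PP p) := PG_contDiff.contDiffAt
  have h1 := cd.contDiffAt_implicitFunction (by simp) (PG_invertible hp _)
  have h2 := cd.eventually_apply_implicitFunction (by simp) (PG_invertible hp _)
  have h3 : PP =ᶠ[𝓝 p] cd.implicitFunction (by simp) (PG_invertible hp _) := by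
    have : ∀ᶠ p' : ℝ × ℝ × ℝ in 𝓝 p, |p'.1| < 1 :=
      (continuous_abs.comp continuous_fst).continuousAt.eventually_lt continuousAt_const hp
    filter_upwards [h2, this] with p' h2 h3
    rw [PG_PP] at h2
    exact PG_unique h3 (PG_PP p') h2
  have h4 : ContDiffAt ℝ (⊤ : ℕ∞) PP p := h1.congr_of_eventuallyEq h3
  have h5 : (fun p : ℝ × ℝ × ℝ => Fl p.2 p.1) = fun p => (ContinuousMap.evalCLM ℝ (1 : unitInterval) (PP p).1, ContinuousMap.evalCLM ℝ (1 : unitInterval) (PP p).2) := by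
    ext p' <;> simp [PP]
  rw [h5]
  exact ((ContinuousLinearMap.contDiff _).contDiffAt.comp p (contDiffAt_fst.comp p h4)).prodMk
    ((ContinuousLinearMap.contDiff _).contDiffAt.comp p (contDiffAt_snd.comp p h4))

lemma Fl_contDiff : ContDiff ℝ (⊤ : ℕ∞) (fun p : ℝ × ℝ × ℝ => Fl p.2 p.1) := by
  have key : ∀ n : ℕ, ∀ p : ℝ × ℝ × ℝ, |p.1| < n + 1 → ContDiffAt ℝ (⊤ : ℕ∞) (fun p : ℝ × ℝ × ℝ => Fl p.2 p.1) p := by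
    intro n
    induction n with
    | zero => intro p hp; exact Fl_contDiffAt_small (by simpa using hp)
    | succ n ih =>
      intro p hp
      push_cast at hp
      have e : (fun p : ℝ × ℝ × ℝ => Fl p.2 p.1) = (fun p : ℝ × ℝ × ℝ => Fl p.2 p.1) ∘
          (fun p : ℝ × ℝ × ℝ => (p.1 / (n + 2), Fl p.2 (p.1 * (n+1) / (n+2)))) := by
        ext1 p
        simp only [Function.comp]
        rw [← Fl_add]
        congr 1
        field_simp
        ring
      rw [e]
      apply ContDiffAt.comp
      · apply Fl_contDiffAt_small
        simp only [abs_div]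
        rw [abs_of_pos (by positivity : (0:ℝ) < n + 2), div_lt_one (by positivity)]
        linarith
      · refine ContDiffAt.prodMk (by fun_prop) ?_
        have := (ih (p.1 * (n+1) / (n+2), p.2) ?_).comp (f := fun p : ℝ × ℝ × ℝ => (p.1 * (n+1) / (n+2), p.2)) p (by fun_prop)
        · exact this
        · simp only [abs_div, abs_mul]
          rw [abs_of_pos (by positivity : (0:ℝ) < n + 2), abs_of_pos (by positivity : (0:ℝ) < n + 1), div_lt_iff₀ (by positivity)]
          nlinarith
  rw [contDiff_iff_contDiffAt]
  intro p
  obtain ⟨n, hn⟩ := exists_nat_gt |p.1|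
  exact key n p (by linarith)


lemma mixed_partial {F G : ℝ × ℝ → ℝ} (hF : ContDiff ℝ (⊤ : ℕ∞) F) (hG : ContDiff ℝ (⊤ : ℕ∞) G)
    (h : ∀ t v, HasDerivAt (fun t => F (t, v)) (G (t, v)) t) (t v : ℝ) :
    HasDerivAt (fun t => deriv (fun v => F (t, v)) v) (deriv (fun v => G (t, v)) v) t := by
  have dF : Differentiable ℝ F := hF.differentiable (by simp)
  have dF' : Differentiable ℝ (fderiv ℝ F) :=
    (hF.fderiv_right (m := 1) (by norm_cast)).differentiable (by simp)
  have hv : ∀ t v, HasDerivAt (fun v => F (t, v)) (fderiv ℝ F (t, v) (0, 1)) v := by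
    intro t v
    have := (dF (t, v)).hasFDerivAt.comp_hasDerivAt v ((hasDerivAt_const v t).prodMk (hasDerivAt_id v))
    exact this
  have ht : ∀ t v, G (t, v) = fderiv ℝ F (t, v) (1, 0) := by
    intro t v
    have := (dF (t, v)).hasFDerivAt.comp_hasDerivAt t ((hasDerivAt_id t).prodMk (hasDerivAt_const t v))
    exact (h t v).unique this
  have e1 : (fun t => deriv (fun v => F (t, v)) v) = fun t => fderiv ℝ F (t, v) (0, 1) := by
    ext t; exact (hv t v).deriv
  rw [e1]
  have e2 : (fun v => G (t, v)) = fun v => fderiv ℝ F (t, v) (1, 0) := by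
    ext v; exact ht t v
  rw [e2]
  have d1 : HasDerivAt (fun v => fderiv ℝ F (t, v)) (fderiv ℝ (fderiv ℝ F) (t, v) (0, 1)) v :=
    (dF' (t, v)).hasFDerivAt.comp_hasDerivAt v ((hasDerivAt_const v t).prodMk (hasDerivAt_id v))
  have d2 : HasDerivAt (fun t => fderiv ℝ F (t, v)) (fderiv ℝ (fderiv ℝ F) (t, v) (1, 0)) t :=
    (dF' (t, v)).hasFDerivAt.comp_hasDerivAt t ((hasDerivAt_id t).prodMk (hasDerivAt_const t v))
  have d1' := (d1.clm_apply (hasDerivAt_const v ((1:ℝ), (0:ℝ))))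
  have d2' := (d2.clm_apply (hasDerivAt_const t ((0:ℝ), (1:ℝ))))
  rw [d1'.deriv]
  refine d2'.congr_deriv ?_
  have hs : IsSymmSndFDerivAt ℝ F (t, v) := ((contDiff_infty.mp hF 2).contDiffAt).isSymmSndFDerivAt (by simp)
  rw [map_zero, hs.eq (0, 1) (1, 0)]

noncomputable def phi (a v t : ℝ) : ℝ := (Fl (a, v) t).1
noncomputable def psi (a v t : ℝ) : ℝ := (Fl (a, v) t).2
noncomputable def yy (a v t : ℝ) : ℝ := deriv (fun v => phi a v t) v
noncomputable def uu (a v t : ℝ) : ℝ := deriv (fun v => psi a v t) v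

lemma phi_contDiff : ContDiff ℝ (⊤ : ℕ∞) (fun p : ℝ × ℝ × ℝ => phi p.1 p.2.1 p.2.2) := by
  have := Fl_contDiff.comp (g := fun p : ℝ × ℝ × ℝ => Fl p.2 p.1) (f := fun p : ℝ × ℝ × ℝ => (p.2.2, p.1, p.2.1)) (by fun_prop)
  exact contDiff_fst.comp this
lemma psi_contDiff : ContDiff ℝ (⊤ : ℕ∞) (fun p : ℝ × ℝ × ℝ => psi p.1 p.2.1 p.2.2) := by
  have := Fl_contDiff.comp (g := fun p : ℝ × ℝ × ℝ => Fl p.2 p.1) (f := fun p : ℝ × ℝ × ℝ => (p.2.2, p.1, p.2.1)) (by fun_prop)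
  exact contDiff_snd.comp this

lemma phi_zero (a v : ℝ) : phi a v 0 = a := by simp [phi, Fl_zero]
lemma psi_zero (a v : ℝ) : psi a v 0 = v := by simp [psi, Fl_zero]
lemma phi_deriv (a v t : ℝ) : HasDerivAt (phi a v) (psi a v t) t := Fl_fst_deriv (a, v) t
lemma psi_deriv (a v t : ℝ) : HasDerivAt (psi a v) (-Real.sin (phi a v t)) t := Fl_snd_deriv (a, v) t

lemma phi_dv (a v t : ℝ) : HasDerivAt (fun v => phi a v t) (yy a v t) v := by
  have h : ContDiff ℝ (⊤ : ℕ∞) (fun v => phi a v t) :=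
    phi_contDiff.comp (f := fun v : ℝ => (a, v, t)) (by fun_prop)
  exact (h.differentiable (by simp) v).hasDerivAt
lemma psi_dv (a v t : ℝ) : HasDerivAt (fun v => psi a v t) (uu a v t) v := by
  have h : ContDiff ℝ (⊤ : ℕ∞) (fun v => psi a v t) :=
    psi_contDiff.comp (f := fun v : ℝ => (a, v, t)) (by fun_prop)
  exact (h.differentiable (by simp) v).hasDerivAt

lemma yy_zero (a v : ℝ) : yy a v 0 = 0 := by simp [yy, phi_zero]
lemma uu_zero (a v : ℝ) : uu a v 0 = 1 := by simp [uu, psi_zero]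

lemma yy_deriv (a v t : ℝ) : HasDerivAt (yy a v) (uu a v t) t := by
  have := mixed_partial (F := fun p => phi a p.2 p.1) (G := fun p => psi a p.2 p.1)
    (phi_contDiff.comp (f := fun p : ℝ × ℝ => (a, p.2, p.1)) (by fun_prop))
    (psi_contDiff.comp (f := fun p : ℝ × ℝ => (a, p.2, p.1)) (by fun_prop))
    (fun t v => phi_deriv a v t) t v
  exact this

lemma uu_deriv (a v t : ℝ) : HasDerivAt (uu a v) (-Real.cos (phi a v t) * yy a v t) t := by
  have := mixed_partial (F := fun p => psi a p.2 p.1) (G := fun p => -Real.sin (phi a p.2 p.1))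
    (psi_contDiff.comp (f := fun p : ℝ × ℝ => (a, p.2, p.1)) (by fun_prop))
    ((Real.contDiff_sin.comp (phi_contDiff.comp (f := fun p : ℝ × ℝ => (a, p.2, p.1)) (by fun_prop))).neg)
    (fun t v => psi_deriv a v t) t v
  have h2 := (phi_dv a v t).sin.neg.deriv
  rw [show deriv (fun v => -Real.sin (phi a (t, v).2 (t, v).1)) v = _ from h2] at this
  refine HasDerivAt.congr_deriv this ?_
  ring

/-- energy conservation -/
lemma energy_const (a v t : ℝ) : (psi a v t)^2/2 - Real.cos (phi a v t) = v^2/2 - Real.cos a := by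
  have h : ∀ t, HasDerivAt (fun t => (psi a v t)^2/2 - Real.cos (phi a v t)) 0 t := by
    intro t
    have := (((psi_deriv a v t).pow 2).div_const 2).sub (phi_deriv a v t).cos
    refine HasDerivAt.congr_deriv this ?_
    norm_num; ring
  have := is_const_of_deriv_eq_zero (fun t => (h t).differentiableAt) (fun t => (h t).deriv) t 0
  simpa [phi_zero, psi_zero] using this

lemma wronskian (a v t : ℝ) : uu a v t * psi a v t + yy a v t * Real.sin (phi a v t) = v := by
  have h : ∀ t, HasDerivAt (fun t => uu a v t * psi a v t + yy a v t * Real.sin (phi a v t)) 0 t := by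
    intro t
    have := ((uu_deriv a v t).mul (psi_deriv a v t)).add ((yy_deriv a v t).mul (phi_deriv a v t).sin)
    refine HasDerivAt.congr_deriv this ?_
    ring
  have := is_const_of_deriv_eq_zero (fun t => (h t).differentiableAt) (fun t => (h t).deriv) t 0
  simpa [phi_zero, psi_zero, uu_zero, yy_zero] using this

lemma pend_unique {x v : ℝ → ℝ} {T : ℝ} (h : IsPendSolOn x v (Icc 0 T)) {t : ℝ} (ht : t ∈ Icc 0 T) :
    x t = phi (x 0) (v 0) t ∧ v t = psi (x 0) (v 0) t := by
  have := Fl_unique_Icc h ht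
  exact ⟨congrArg Prod.fst this, congrArg Prod.snd this⟩

lemma phi_pend (a v : ℝ) (s : Set ℝ) : IsPendSolOn (phi a v) (psi a v) s :=
  fun t _ => ⟨phi_deriv a v t, psi_deriv a v t⟩

lemma phi_add (a v s t : ℝ) : phi a v (s + t) = phi (phi a v s) (psi a v s) t := by
  simp only [phi, psi, Fl_add]
lemma psi_add (a v s t : ℝ) : psi a v (s + t) = psi (phi a v s) (psi a v s) t := by
  simp only [phi, psi, Fl_add]

/-- uniqueness for global solutions, in scalar form -/
lemma pend_unique_univ {x v : ℝ → ℝ} (h1 : ∀ t, HasDerivAt x (v t) t)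
    (h2 : ∀ t, HasDerivAt v (-Real.sin (x t)) t) (t : ℝ) :
    x t = phi (x 0) (v 0) t ∧ v t = psi (x 0) (v 0) t := by
  have := Fl_unique (fun t => (x t, v t)) (fun t => (h1 t).prodMk (h2 t)) t
  exact ⟨congrArg Prod.fst this, congrArg Prod.snd this⟩

/-- reversibility -/
lemma phi_neg_time (a v t : ℝ) : phi a v (-t) = phi a (-v) t ∧ psi a v (-t) = - psi a (-v) t := by
  have := pend_unique_univ (x := fun t => phi a v (-t)) (v := fun t => - psi a v (-t))
    (fun t => ((phi_deriv a v (-t)).comp t (hasDerivAt_neg t)).congr_deriv (by ring)) (fun t =>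
      ((psi_deriv a v (-t)).comp t (hasDerivAt_neg t)).neg.congr_deriv (by ring)) t
  simp only [neg_zero, phi_zero, psi_zero] at this
  exact ⟨this.1, by linarith [this.2]⟩

lemma phi_neg (a v t : ℝ) : phi (-a) (-v) t = - phi a v t ∧ psi (-a) (-v) t = - psi a v t := by
  have := pend_unique_univ (x := fun t => - phi a v t) (v := fun t => - psi a v t)
    (fun t => (phi_deriv a v t).neg) (fun t => (psi_deriv a v t).neg.congr_deriv (by simp)) t
  simp only [phi_zero, psi_zero] at this
  exact ⟨this.1.symm, this.2.symm⟩

/-- the equilibria `π + 2kπ` are not reached -/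
lemma phi_eq_of_rest {a v t : ℝ} (hs : Real.sin (phi a v t) = 0) (hv : psi a v t = 0) :
    v = 0 ∧ ∀ s, phi a v s = a := by
  have hc := pend_unique_univ (x := fun _ => phi a v t) (v := fun _ => 0)
    (fun t => hasDerivAt_const _ _) (fun s => by simpa [hs] using hasDerivAt_const s (0:ℝ))
  have h2 : ∀ s, phi a v (t + s) = phi a v t := fun s => by
    rw [phi_add, hv]; exact (hc s).1.symm
  have h3 : ∀ s, psi a v (t + s) = 0 := fun s => by
    rw [psi_add, hv]; exact (hc s).2.symm
  have h4 : v = 0 := by simpa [psi_zero] using h3 (-t)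
  have h5 : a = phi a v t := by simpa [phi_zero] using h2 (-t)
  refine ⟨h4, fun s => ?_⟩
  have := h2 (s - t)
  rw [add_sub_cancel] at this
  rw [this, ← h5]


lemma numI0 (W : ℝ) (h1 : 0 ≤ W) (h2 : W ≤ 7/10) :
    0 ≤ (1 - W^2/2)^2 - (1 - W^2/4)^3 * (0.99 - 0.355 * W^3)^2 := by
  have e : (1 - W^2/2)^2 - (1 - W^2/4)^3 * (0.99 - 0.355 * W^3)^2 =
      (19900000000/13841287201) * (W - 0)^0 * (7/10 - W)^12
      + (238800000000/13841287201) * (W - 0)^1 * (7/10 - W)^11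
      + (1183586750000/13841287201) * (W - 0)^2 * (7/10 - W)^10
      + (3320962200000/13841287201) * (W - 0)^3 * (7/10 - W)^9
      + (6194658173125/13841287201) * (W - 0)^4 * (7/10 - W)^8
      + (8901233882750/13841287201) * (W - 0)^5 * (7/10 - W)^7
      + (25578949944375/31637227888) * (W - 0)^6 * (7/10 - W)^6
      + (12388367343260/13841287201) * (W - 0)^7 * (7/10 - W)^5
      + (43376240006737/55365148804) * (W - 0)^8 * (7/10 - W)^4
      + (4295163129644077/8858423808640) * (W - 0)^9 * (7/10 - W)^3
      + (17149966353946483/88584238086400) * (W - 0)^10 * (7/10 - W)^2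
      + (15319252889326/346032180025) * (W - 0)^11 * (7/10 - W)^1
      + (155329072167397441/35433695234560000) * (W - 0)^12 * (7/10 - W)^0 := by ring
  rw [e]
  have h1' : 0 ≤ W - 0 := by linarith
  have h2' : 0 ≤ 7/10 - W := by linarith
  positivity

lemma numI1 (W : ℝ) (h1 : 7/10 ≤ W) (h2 : W ≤ 11/10) :
    0 ≤ (1 - W^2/2)^2 - (1 - W^2/4)^3 * (0.99 - 0.355 * W^3)^2 := by
  have e : (1 - W^2/2)^2 - (1 - W^2/4)^3 * (0.99 - 0.355 * W^3)^2 =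
      (155329072167397441/42949672960000) * (W - 7/10)^0 * (11/10 - W)^12
      + (508166840808161879/10737418240000) * (W - 7/10)^1 * (11/10 - W)^11
      + (6030317050964020137/21474836480000) * (W - 7/10)^2 * (11/10 - W)^10
      + (2142697644907826167/2147483648000) * (W - 7/10)^3 * (11/10 - W)^9
      + (20289467132148323219/8589934592000) * (W - 7/10)^4 * (11/10 - W)^8
      + (21047303070246989287/5368709120000) * (W - 7/10)^5 * (11/10 - W)^7
      + (50174089161708045519/10737418240000) * (W - 7/10)^6 * (11/10 - W)^6
      + (21611379152436384223/5368709120000) * (W - 7/10)^7 * (11/10 - W)^5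
      + (21339596739829995779/8589934592000) * (W - 7/10)^8 * (11/10 - W)^4
      + (2297049197229359263/2147483648000) * (W - 7/10)^9 * (11/10 - W)^3
      + (6540158072550957897/21474836480000) * (W - 7/10)^10 * (11/10 - W)^2
      + (551919242763911471/10737418240000) * (W - 7/10)^11 * (11/10 - W)^1
      + (166783717151805361/42949672960000) * (W - 7/10)^12 * (11/10 - W)^0 := by ring
  rw [e]
  have h1' : 0 ≤ W - 7/10 := by linarith
  have h2' : 0 ≤ 11/10 - W := by linarith
  positivity

lemma numI2 (W : ℝ) (h1 : 11/10 ≤ W) (h2 : W ≤ 176/125) :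
    0 ≤ (1 - W^2/2)^2 - (1 - W^2/4)^3 * (0.99 - 0.355 * W^3)^2 := by
  have e : (1 - W^2/2)^2 - (1 - W^2/4)^3 * (0.99 - 0.355 * W^3)^2 =
      (15905734744244133090972900390625/177929783385962838621884416) * (W - 11/10)^0 * (176/125 - W)^12
      + (686412634175829044342041015625/695038216351417338366736) * (W - 11/10)^1 * (176/125 - W)^11
      + (4954852707139251106109619140625/1010964678329334310351616) * (W - 11/10)^2 * (176/125 - W)^10
      + (7275214035596322153656005859375/505482339164667155175808) * (W - 11/10)^3 * (176/125 - W)^9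
      + (218869309905552337967529296875/7898161549447924299622) * (W - 11/10)^4 * (176/125 - W)^8
      + (288976399029946316938994140625/7898161549447924299622) * (W - 11/10)^5 * (176/125 - W)^7
      + (303347690589761135652598828125/9026470342226199199568) * (W - 11/10)^6 * (176/125 - W)^6
      + (84029214010652199358720093750/3949080774723962149811) * (W - 11/10)^7 * (176/125 - W)^5
      + (35377315363291663408436309375/3949080774723962149811) * (W - 11/10)^8 * (176/125 - W)^4
      + (9144021158179082506991656000/3949080774723962149811) * (W - 11/10)^9 * (176/125 - W)^3
      + (1211225740726248691392466704/3949080774723962149811) * (W - 11/10)^10 * (176/125 - W)^2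
      + (12931982918301701138676064256/1085997213049089591198025) * (W - 11/10)^11 * (176/125 - W)^1
      + (2859921733987687114871478016/27149930326227239779950625) * (W - 11/10)^12 * (176/125 - W)^0 := by ring
  rw [e]
  have h1' : 0 ≤ W - 11/10 := by linarith
  have h2' : 0 ≤ 176/125 - W := by linarith
  positivity

lemma numII0 (W : ℝ) (h1 : 0 ≤ W) (h2 : W ≤ 4/5) :
    0 ≤ (1 - W^2/4) * (0.25 + 0.915 * W^3)^2 - W^4 := by
  have e : (1 - W^2/4) * (0.25 + 0.915 * W^3)^2 - W^4 =
      (390625/1048576) * (W - 0)^0 * (4/5 - W)^8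
      + (390625/131072) * (W - 0)^1 * (4/5 - W)^7
      + (1359375/131072) * (W - 0)^2 * (4/5 - W)^6
      + (717625/32768) * (W - 0)^3 * (4/5 - W)^5
      + (15583125/524288) * (W - 0)^4 * (4/5 - W)^4
      + (3098845/131072) * (W - 0)^5 * (4/5 - W)^3
      + (971581/102400) * (W - 0)^6 * (4/5 - W)^2
      + (2922967/1638400) * (W - 0)^7 * (4/5 - W)^1
      + (93825581/655360000) * (W - 0)^8 * (4/5 - W)^0 := by ring
  rw [e]
  have h1' : 0 ≤ W - 0 := by linarith
  have h2' : 0 ≤ 4/5 - W := by linarith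
  positivity

lemma numII1 (W : ℝ) (h1 : 4/5 ≤ W) (h2 : W ≤ 11/10) :
    0 ≤ (1 - W^2/4) * (0.25 + 0.915 * W^3)^2 - W^4 := by
  have e : (1 - W^2/4) * (0.25 + 0.915 * W^3)^2 - W^4 =
      (1501209296/4100625) * (W - 4/5)^0 * (11/10 - W)^8
      + (9498181456/4100625) * (W - 4/5)^1 * (11/10 - W)^7
      + (25940495807/4100625) * (W - 4/5)^2 * (11/10 - W)^6
      + (42371586988/4100625) * (W - 4/5)^3 * (11/10 - W)^5
      + (10079026024/820125) * (W - 4/5)^4 * (11/10 - W)^4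
      + (383899728431/32805000) * (W - 4/5)^5 * (11/10 - W)^3
      + (535924035227/65610000) * (W - 4/5)^6 * (11/10 - W)^2
      + (13897760689/4100625) * (W - 4/5)^7 * (11/10 - W)^1
      + (620044665791/1049760000) * (W - 4/5)^8 * (11/10 - W)^0 := by ring
  rw [e]
  have h1' : 0 ≤ W - 4/5 := by linarith
  have h2' : 0 ≤ 11/10 - W := by linarith
  positivity

lemma numII2 (W : ℝ) (h1 : 11/10 ≤ W) (h2 : W ≤ 71/50) :
    0 ≤ (1 - W^2/4) * (0.25 + 0.915 * W^3)^2 - W^4 := by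
  have e : (1 - W^2/4) * (0.25 + 0.915 * W^3)^2 - W^4 =
      (387527916119375/1099511627776) * (W - 11/10)^0 * (71/50 - W)^8
      + (504405465281375/137438953472) * (W - 11/10)^1 * (71/50 - W)^7
      + (4532314087964425/274877906944) * (W - 11/10)^2 * (71/50 - W)^6
      + (5638621538564985/137438953472) * (W - 11/10)^3 * (71/50 - W)^5
      + (33442916175315085/549755813888) * (W - 11/10)^4 * (71/50 - W)^4
      + (36978038830952637/687194767360) * (W - 11/10)^5 * (71/50 - W)^3
      + (182204087716925857/6871947673600) * (W - 11/10)^6 * (71/50 - W)^2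
      + (100498690969983811/17179869184000) * (W - 11/10)^7 * (71/50 - W)^1
      + (115933496501899871/687194767360000) * (W - 11/10)^8 * (71/50 - W)^0 := by ring
  rw [e]
  have h1' : 0 ≤ W - 11/10 := by linarith
  have h2' : 0 ≤ 71/50 - W := by linarith
  positivity

lemma numF (r : ℝ) (h1 : 1039/1000 ≤ r) (h2 : r ≤ 283/200) :
    0 ≤ (8/3 - r^2) * (2.64 - r^2) / 0.63225 * r^3 * (2 - r^2) - 0.731 * (r^2 + (8/3 - r^2)) * (2 - r^2) - 1.843 * ((0.651972 - 0.0759 * r^2) + (8/3 - r^2) * (0.651972 - 0.0759 * r^2)^3) * r^3 * (2 - r^2) + (8/3 - r^2) * r^2 * (2 - r^2) - (0.915 + 0.355 * (8/3 - r^2)) * r^4 * (2 - r^2) + 0.707 * (0.99 * (8/3 - r^2) - 0.25) * r^4 - 1/100 := by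
  have e : (8/3 - r^2) * (2.64 - r^2) / 0.63225 * r^3 * (2 - r^2) - 0.731 * (r^2 + (8/3 - r^2)) * (2 - r^2) - 1.843 * ((0.651972 - 0.0759 * r^2) + (8/3 - r^2) * (0.651972 - 0.0759 * r^2)^3) * r^3 * (2 - r^2) + (8/3 - r^2) * r^2 * (2 - r^2) - (0.915 + 0.355 * (8/3 - r^2)) * r^4 * (2 - r^2) + 0.707 * (0.99 * (8/3 - r^2) - 0.25) * r^4 - 1/100 =
      (12714221812157753565374647776081133946427305830554784266241/22777815357016374299620237064338931712000000000000000) * (r - 1039/1000)^0 * (283/200 - r)^13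
      + (29948291768622010524506977416864023869595398905225851700401/4555563071403274859924047412867786342400000000000000) * (r - 1039/1000)^1 * (283/200 - r)^12
      + (15805704585999944708229311947975230649708403100607504017391/455556307140327485992404741286778634240000000000000) * (r - 1039/1000)^2 * (283/200 - r)^11
      + (9856574615311631491516032300783446514368230165726395970499/91111261428065497198480948257355726848000000000000) * (r - 1039/1000)^3 * (283/200 - r)^10
      + (1612591229926055292310899414733075532996870726322981348703/7288900914245239775878475860588458147840000000000) * (r - 1039/1000)^4 * (283/200 - r)^9
      + (2273786917816550212792589593408008475131020504935578812419/7288900914245239775878475860588458147840000000000) * (r - 1039/1000)^5 * (283/200 - r)^8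
      + (37906147716914355186580529287638328474803636839020897127/121481681904087329597974597676474302464000000000) * (r - 1039/1000)^6 * (283/200 - r)^7
      + (5544910220611417348518354142207088476557488811278721619/24296336380817465919594919535294860492800000000) * (r - 1039/1000)^7 * (283/200 - r)^6
      + (7613404208306412749551927245304921514183511706315051687/58311207313961918207027806884707665182720000000) * (r - 1039/1000)^8 * (283/200 - r)^5
      + (154955312693920020973214785202163803721688301137450171/2332448292558476728281112275388306607308800000) * (r - 1039/1000)^9 * (283/200 - r)^4
      + (37662507143064741741773959474297233832318535465621687/1166224146279238364140556137694153303654400000) * (r - 1039/1000)^10 * (283/200 - r)^3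
      + (3026388921492500226081870830203312605653678950913947/233244829255847672828111227538830660730880000) * (r - 1039/1000)^11 * (283/200 - r)^2
      + (311595915277026284142952019234684890111410494505053/93297931702339069131244491015532264292352000) * (r - 1039/1000)^12 * (283/200 - r)^1
      + (7209773686558642475113318790990465991055449297157/18659586340467813826248898203106452858470400) * (r - 1039/1000)^13 * (283/200 - r)^0 := by ring
  rw [e]
  have h1' : 0 ≤ r - 1039/1000 := by linarith
  have h2' : 0 ≤ 283/200 - r := by linarith
  positivity

lemma cos_one_bd : 0.54 ≤ cos 1 ∧ cos 1 ≤ 0.541 := by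
  have h := abs_le.1 (Real.cos_bound (x := 1/32) (by rw [abs_of_pos] <;> norm_num))
  rw [abs_of_pos (by norm_num : (0:ℝ) < 1/32)] at h
  obtain ⟨ha, hb⟩ := h
  have e1 : cos (1/16) = 2 * cos (1/32)^2 - 1 := by rw [← cos_two_mul]; norm_num
  have e2 : cos (1/8) = 2 * cos (1/16)^2 - 1 := by rw [← cos_two_mul]; norm_num
  have e3 : cos (1/4) = 2 * cos (1/8)^2 - 1 := by rw [← cos_two_mul]; norm_num
  have e4 : cos (1/2) = 2 * cos (1/4)^2 - 1 := by rw [← cos_two_mul]; norm_num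
  have e5 : cos 1 = 2 * cos (1/2)^2 - 1 := by rw [← cos_two_mul]; norm_num
  have a0 : 0.9995116690 ≤ cos (1/32) := by norm_num at ha ⊢; linarith
  have b0 : cos (1/32) ≤ 0.9995117685 := by norm_num at hb ⊢; linarith
  have a1 : 0.9980471520 ≤ cos (1/16) := by rw [e1]; nlinarith only [a0]
  have b1 : cos (1/16) ≤ 0.9980475510 := by rw [e1]; nlinarith only [a0, b0]
  have a2 : 0.9921962350 ≤ cos (1/8) := by rw [e2]; nlinarith only [a1]
  have b2 : cos (1/8) ≤ 0.9921978290 := by rw [e2]; nlinarith only [a1, b1]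
  have a3 : 0.9689067300 ≤ cos (1/4) := by rw [e3]; nlinarith only [a2]
  have b3 : cos (1/4) ≤ 0.9689130700 := by rw [e3]; nlinarith only [a2, b2]
  have a4 : 0.8775605000 ≤ cos (1/2) := by rw [e4]; nlinarith only [a3]
  have b4 : cos (1/2) ≤ 0.8775850800 := by rw [e4]; nlinarith only [a3, b3]
  constructor
  · rw [e5]; nlinarith only [a4]
  · rw [e5]; nlinarith only [a4, b4]

lemma sin_one_bd : 0.84 ≤ sin 1 ∧ sin 1 ≤ 0.843 := by
  obtain ⟨a, b⟩ := cos_one_bd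
  have h := sin_sq_add_cos_sq (1:ℝ)
  have hp : 0 < sin 1 := sin_pos_of_pos_of_lt_pi one_pos (by linarith [pi_gt_three])
  constructor <;> nlinarith

lemma numI (W c : ℝ) (hW : 0 < W) (hW2 : W^2 ≤ 2) (hc : 0 < c) (hcc : c^2 = 1 - W^2/4) :
    (0.99 - 0.355 * W^3) * c^3 ≤ 1 - W^2/2 := by
  rcases le_or_gt (0.99 - 0.355 * W^3) 0 with h | h
  · have : 0 < c^3 := by positivity
    nlinarith
  · have hW3 : W < 1.408 := by
      by_contra hh
      push Not at hh
      have : (1.408:ℝ)^3 ≤ W^3 := by gcongr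
      norm_num at this h
      linarith
    have key : 0 ≤ (1 - W^2/2)^2 - (1 - W^2/4)^3 * (0.99 - 0.355 * W^3)^2 := by
      rcases le_total W (7/10) with h1 | h1
      · exact numI0 W hW.le h1
      rcases le_total W (11/10) with h2 | h2
      · exact numI1 W h1 h2
      · exact numI2 W h2 (by norm_num at hW3 ⊢; linarith)
    rw [← hcc] at key
    apply le_of_sq_le_sq _ (by linarith)
    nlinarith

lemma numII (W c : ℝ) (hW : 0 < W) (hW2 : W^2 ≤ 2) (hc : 0 < c) (hcc : c^2 = 1 - W^2/4) :
    W^2 ≤ c * (0.25 + 0.915 * W^3) := by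
  have key : 0 ≤ (1 - W^2/4) * (0.25 + 0.915 * W^3)^2 - W^4 := by
    rcases le_total W (4/5) with h1 | h1
    · exact numII0 W hW.le h1
    rcases le_total W (11/10) with h2 | h2
    · exact numII1 W h1 h2
    · exact numII2 W h2 (by nlinarith)
  rw [← hcc] at key
  apply le_of_sq_le_sq _ (by positivity)
  nlinarith

lemma algY (y : ℝ) (h1 : y ≤ 2.08) : (1.56 - y)^2 * y ≤ 0.75^2 := by
  nlinarith [mul_nonneg (sq_nonneg (y - 0.52)) (by linarith : 0 ≤ 2.08 - y)]

lemma algF (R C S B A e r : ℝ) (hr : r ≠ 0) (he : e ≠ 0) :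
    R - (0.731 * (1/r + C/r^3) + 1.843 * S - C/r + B * r - A / e * (0.707 * r)) =
    (R * r^3 * e - 0.731 * (r^2 + C) * e - 1.843 * S * r^3 * e + C * r^2 * e - B * r^4 * e
      + 0.707 * A * r^4) / (r^3 * e) := by
  field_simp
  ring

/-- The final one-variable inequality. -/
lemma numFinal (r w sb h0 h1 C rs : ℝ) (hr : 0 < r) (hr2 : r^2 < 2) (hw : 0 < w)
    (hwr : w^2 ≤ r^2 - 1.08) (hsb : 0 < sb) (hsb1 : sb ≤ 0.843) (hC : C = 8/3 - r^2)
    (hrs : 0 < rs) (hrs2 : rs^2 = r^2 + 2)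
    (hh0 : h0 = 1/r + C/r^3) (hh1 : h1 = 1/rs + C/rs^3) :
    0.731 * h0 + 1.843 * h1 - C/r + (0.915 + 0.355 * C) * r
      - (0.99 * C - 0.25) / (2 - r^2) * (r / √2) < C / (w * sb) := by
  have hCp : 0 < C := by rw [hC]; linarith
  have hrl : 1039/1000 ≤ r := by nlinarith
  have hru : r ≤ 283/200 := by nlinarith
  have hF := numF r hrl hru
  rw [← hC] at hF
  set L := 0.651972 - 0.0759 * r^2 with hL
  have hLp : 0 < L := by rw [hL]; nlinarith
  -- bound on 1/rs
  have hu1 : 1.08 ≤ r^2 := by nlinarith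
  have hrsL : 1/rs ≤ L := by
    rw [div_le_iff₀ hrs]
    apply le_of_sq_le_sq _ (by positivity)
    rw [mul_pow, hrs2, hL]
    nlinarith [mul_nonneg (sub_nonneg.2 hu1) (sub_nonneg.2 hr2.le)]
  have hh1L : h1 ≤ L + C * L^3 := by
    rw [hh1]
    have : C/rs^3 = C * (1/rs)^3 := by field_simp
    rw [this]
    have : 0 < 1/rs := by positivity
    gcongr
  have hsq : 0.707 * r ≤ r / √2 := by
    rw [le_div_iff₀ (by positivity)]
    have : √2 ≤ 1.4143 := by
      rw [Real.sqrt_le_left (by norm_num)]; norm_num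
    nlinarith
  have hA : 0 < 0.99 * C - 0.25 := by rw [hC]; norm_num; linarith
  have he : 0 < 2 - r^2 := by linarith
  have hw1 : (2.64 - r^2)/0.75 ≤ 1 / w := by
    rw [le_div_iff₀ hw]
    rcases le_total (2.64 - r^2) 0 with h | h
    · nlinarith
    · rw [div_mul_eq_mul_div, div_le_one (by norm_num)]
      apply le_of_sq_le_sq _ (by norm_num)
      have hy : 0 ≤ r^2 - 1.08 := by nlinarith
      have hy2 : r^2 - 1.08 ≤ 2.08 := by norm_num at hr2 ⊢; linarith
      have h3 : ((2.64 - r^2) * w)^2 ≤ (2.64 - r^2)^2 * (r^2 - 1.08) := by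
        rw [mul_pow]; gcongr
      refine h3.trans ?_
      have : (2.64 - r^2)^2 * (r^2 - 1.08) = (1.56 - (r^2-1.08))^2 * (r^2-1.08) := by ring
      rw [this]
      exact algY _ hy2
  have hRr : C * (2.64 - r^2) / 0.63225 ≤ C / (w * sb) := by
    have h4 : C * (2.64 - r^2) / 0.63225 = C * ((2.64 - r^2)/0.75) * (1/0.843) := by
      field_simp; ring
    have h5 : C / (w * sb) = C * (1/w) * (1/sb) := by field_simp
    rw [h4, h5]
    have h6 : 1/0.843 ≤ 1/sb := one_div_le_one_div_of_le hsb hsb1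
    have h7 : 0 < 1/w := by positivity
    gcongr
  refine lt_of_lt_of_le ?_ hRr
  have h8 : (0.99 * C - 0.25) / (2 - r^2) * (0.707 * r) ≤ (0.99 * C - 0.25) / (2 - r^2) * (r / √2) := by
    gcongr
  have h9 : 0.731 * (1/r + C/r^3) + 1.843 * (L + C * L^3) - C/r + (0.915 + 0.355 * C) * r
      - (0.99 * C - 0.25) / (2 - r^2) * (0.707 * r) < C * (2.64 - r^2) / 0.63225 := by
    rw [← sub_pos]
    have : C * (2.64 - r^2) / 0.63225 - (0.731 * (1/r + C/r^3) + 1.843 * (L + C * L^3) - C/r + (0.915 + 0.355 * C) * r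
      - (0.99 * C - 0.25) / (2 - r^2) * (0.707 * r)) = (C * (2.64 - r^2) / 0.63225 * r^3 * (2 - r^2) - 0.731 * (r^2 + C) * (2 - r^2) - 1.843 * (L + C * L^3) * r^3 * (2 - r^2) + C * r^2 * (2 - r^2) - (0.915 + 0.355 * C) * r^4 * (2 - r^2) + 0.707 * (0.99 * C - 0.25) * r^4) / (r^3 * (2 - r^2)) := by
      exact algF _ _ _ _ _ _ _ hr.ne' he.ne'
    rw [this]
    refine div_pos (lt_of_lt_of_le (by norm_num) (sub_nonneg.1 hF)) (by positivity)
  rw [hh0]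
  linarith

lemma numBracket (r C Wb : ℝ) (hr2 : r^2 < 2) (hu : 1.08 ≤ r^2) (hC : C = 8/3 - r^2)
    (hWp : 0 < Wb) (hW : Wb^2 ≤ 0.92) :
    (0.915 + 0.355 * C) ≤ (0.99 * C - 0.25) / (2 - r^2) / Wb := by
  have hW1 : Wb ≤ 0.9592 := by nlinarith
  have he : 0 < 2 - r^2 := by linarith
  rw [le_div_iff₀ hWp, le_div_iff₀ he]
  have hB : 0 < 0.915 + 0.355 * C := by rw [hC]; norm_num; linarith
  have : (0.915 + 0.355 * C) * Wb * (2 - r^2) ≤ (0.915 + 0.355 * C) * 0.9592 * (2 - r^2) := by gcongr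
  refine this.trans ?_
  rw [hC]
  nlinarith


lemma anti_of_deriv {f f' : ℝ → ℝ} {a b : ℝ} (hab : a ≤ b) (h : ∀ t ∈ Icc a b, HasDerivAt f (f' t) t)
    (h' : ∀ t ∈ Icc a b, f' t ≤ 0) : f b ≤ f a := by
  have : AntitoneOn f (Icc a b) := by
    apply antitoneOn_of_deriv_nonpos (convex_Icc a b)
    · exact fun t ht => (h t ht).continuousAt.continuousWithinAt
    · intro t ht
      rw [interior_Icc] at ht
      exact (h t (Ioo_subset_Icc_self ht)).differentiableAt.differentiableWithinAt
    · intro t ht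
      rw [interior_Icc] at ht
      rw [(h t (Ioo_subset_Icc_self ht)).deriv]
      exact h' t (Ioo_subset_Icc_self ht)
  exact this (left_mem_Icc.2 hab) (right_mem_Icc.2 hab) hab

lemma mono_of_deriv {f f' : ℝ → ℝ} {a b : ℝ} (hab : a ≤ b) (h : ∀ t ∈ Icc a b, HasDerivAt f (f' t) t)
    (h' : ∀ t ∈ Icc a b, 0 ≤ f' t) : f a ≤ f b := by
  have := anti_of_deriv (f := fun t => - f t) (f' := fun t => - f' t) hab
    (fun t ht => (h t ht).neg) (fun t ht => by linarith [h' t ht])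
  linarith

lemma conv_ineq (r rs m g C : ℝ) (hr : 0 < r) (hrs : 0 < rs) (hrs2 : rs^2 = r^2 + 2) (hm0 : 0 ≤ m)
    (hm1 : m ≤ 1) (hg : 0 < g) (hg2 : g^2 = r^2 + 2 * m) (hC : 0 ≤ C) :
    1/g + C/g^3 ≤ (1/r + C/r^3) * (1 - m) + (1/rs + C/rs^3) * m := by
  have h1 : (1-m)*r + m*rs ≤ g := by
    apply le_of_sq_le_sq _ hg.le
    nlinarith [mul_nonneg (mul_nonneg hm0 (sub_nonneg.2 hm1)) (sq_nonneg (r - rs))]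
  have h2 : 1/g ≤ (1-m) * (1/r) + m * (1/rs) := by
    rw [div_le_iff₀ hg]
    have : 1 ≤ ((1-m) * (1/r) + m * (1/rs)) * ((1-m)*r + m*rs) := by
      have e : ((1-m) * (1/r) + m * (1/rs)) * ((1-m)*r + m*rs) - 1 = m * (1-m) * (r - rs)^2 / (r * rs) := by
        field_simp; ring
      have : 0 ≤ m * (1-m) * (r - rs)^2 / (r * rs) := by
        have := sub_nonneg.2 hm1
        positivity
      linarith
    refine this.trans ?_
    have := sub_nonneg.2 hm1
    gcongr
  have h3 : (1/g)^3 ≤ (1-m) * (1/r)^3 + m * (1/rs)^3 := by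
    have h4 : (1/g)^3 ≤ ((1-m) * (1/r) + m * (1/rs))^3 := by
      have : 0 < 1/g := by positivity
      gcongr
    refine h4.trans ?_
    have := (convexOn_pow 3).2 (x := 1/r) (y := 1/rs) (mem_Ici.2 (by positivity)) (mem_Ici.2 (by positivity))
      (sub_nonneg.2 hm1) hm0 (by ring)
    simpa using this
  have e1 : C/g^3 = C * (1/g)^3 := by field_simp
  have e2 : C/r^3 = C * (1/r)^3 := by field_simp
  have e3 : C/rs^3 = C * (1/rs)^3 := by field_simp
  rw [e1, e2, e3]
  nlinarith [mul_le_mul_of_nonneg_left h3 hC]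

/-- derivative of `y / v` -/
lemma yv_deriv (a v t : ℝ) (h : psi a v t ≠ 0) :
    HasDerivAt (fun t => yy a v t / psi a v t) (v / (psi a v t)^2) t := by
  refine ((yy_deriv a v t).div (psi_deriv a v t) h).congr_deriv ?_
  rw [show uu a v t * psi a v t - yy a v t * -sin (phi a v t) = v by
    linarith [wronskian a v t]]

lemma seg1 {a v t1 r rs C : ℝ} (ha : a ∈ Icc (-1:ℝ) 1) (ht1 : 0 ≤ t1) (hv : 0 < v)
    (hpos : ∀ t ∈ Icc 0 t1, 0 < psi a v t ∧ |phi a v t| ≤ π/2) (hend : phi a v t1 = π/2)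
    (hr : psi a v t1 = r) (hrs : 0 < rs) (hrs2 : rs^2 = r^2 + 2) (hC : 0 ≤ C) :
    t1 + C * (yy a v t1 / v) / r ≤ 0.731 * (1/r + C/r^3) + 1.843 * (1/rs + C/rs^3) := by
  have hrp : 0 < r := by rw [← hr]; exact (hpos t1 ⟨ht1, le_rfl⟩).1
  set h0 := 1/r + C/r^3 with hh0
  set h1 := 1/rs + C/rs^3 with hh1
  have h0p : 0 ≤ h0 := by positivity
  have h1p : 0 ≤ h1 := by positivity
  have hen : ∀ t, (psi a v t)^2 = r^2 + 2 * cos (phi a v t) := by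
    intro t
    have e1 := energy_const a v t
    have e2 := energy_const a v t1
    rw [hend, hr, cos_pi_div_two] at e2
    linarith
  have key := anti_of_deriv (f := fun t => t + C / v * (yy a v t / psi a v t)
      - (h0 * (phi a v t - sin (phi a v t)) + h1 * sin (phi a v t)))
    (f' := fun t => 1 + C / v * (v / (psi a v t)^2)
      - (h0 * (psi a v t - cos (phi a v t) * psi a v t) + h1 * (cos (phi a v t) * psi a v t))) ht1
    (fun t ht => ((hasDerivAt_id t).add ((yv_deriv a v t (hpos t ht).1.ne').const_mul _)).sub
      ((((phi_deriv a v t).sub (phi_deriv a v t).sin).const_mul _).add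
        ((phi_deriv a v t).sin.const_mul _)))
    (fun t ht => by
      obtain ⟨hp, hx⟩ := hpos t ht
      have hx' := abs_le.1 hx
      have := conv_ineq r rs (cos (phi a v t)) (psi a v t) C hrp hrs hrs2
        (cos_nonneg_of_mem_Icc ⟨by linarith, by linarith⟩) (cos_le_one _) hp (hen t) hC
      have h2 := mul_le_mul_of_nonneg_left this hp.le
      have e : psi a v t * (1/psi a v t + C / (psi a v t)^3) = 1 + C / v * (v / (psi a v t)^2) := by
        field_simp
      rw [e] at h2
      rw [← hh0, ← hh1] at h2
      linarith)
  simp only [phi_zero, yy_zero, psi_zero, hend, hr, sin_pi_div_two] at key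
  have e : C / v * (yy a v t1 / r) = C * (yy a v t1 / v) / r := by field_simp
  rw [e] at key
  have hs1 : sin a + sin 1 ≤ a + 1 := by
    have := abs_le.1 (abs_sin_sub_sin_le a (-1))
    rw [sin_neg, abs_of_nonneg (by linarith [ha.1] : 0 ≤ a - -1)] at this
    linarith [this.2]
  have hs2 : 0 ≤ sin a + sin 1 := by
    have := sin_le_sin_of_le_of_le_pi_div_two (x := -1) (y := a) (by linarith [pi_gt_three]) (by linarith [ha.2, pi_gt_three]) ha.1
    rw [sin_neg] at this
    linarith
  have hb := sin_one_bd
  have hk0 : π/2 - sin 1 ≤ 0.731 := by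
    have := pi_lt_d4; norm_num at this hb ⊢; linarith [hb.1]
  have hk1 : 1 + sin 1 ≤ 1.843 := by
    norm_num at hb ⊢; linarith [hb.2]
  have m1 := mul_le_mul_of_nonneg_left hk0 h0p
  have m2 := mul_le_mul_of_nonneg_left hk1 h1p
  have m3 := mul_nonneg h0p (sub_nonneg.2 hs1)
  have m4 := mul_nonneg h1p hs2
  simp only [mul_zero, zero_div] at key
  linarith

lemma seg2 {a v t1 T r C : ℝ} (ht1 : t1 ≤ T) (hv : 0 < v)
    (hpos : ∀ t ∈ Icc t1 T, π/2 ≤ phi a v t ∧ phi a v t < π) (hend : phi a v t1 = π/2)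
    (hr : psi a v t1 = r) (hrp : 0 < r) (hr2 : r^2 < 2) (hC : 0 ≤ C) :
    T - C * (uu a v T / v / sin (phi a v T)) + (0.915 + 0.355 * C) * psi a v T
        - (0.99 * C - 0.25) / (2 - r^2) * (psi a v T / (2 * cos (phi a v T / 2)))
      ≤ t1 - C * ((1 - yy a v t1 / v) / r) + (0.915 + 0.355 * C) * r
        - (0.99 * C - 0.25) / (2 - r^2) * (r / √2) := by
  set A := 0.99 * C - 0.25 with hA
  set B := 0.915 + 0.355 * C with hB
  have hen : ∀ t, (psi a v t)^2 = r^2 + 2 * cos (phi a v t) := by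
    intro t
    have e1 := energy_const a v t
    have e2 := energy_const a v t1
    rw [hend, hr, cos_pi_div_two] at e2
    linarith
  have he : 0 < 2 - r^2 := by linarith
  have hsin : ∀ t ∈ Icc t1 T, 0 < sin (phi a v t) := fun t ht =>
    sin_pos_of_pos_of_lt_pi (by linarith [(hpos t ht).1, pi_pos]) (hpos t ht).2
  have hW : ∀ t ∈ Icc t1 T, 0 < cos (phi a v t / 2) := fun t ht =>
    cos_pos_of_mem_Ioo ⟨by linarith [(hpos t ht).1, pi_pos], by linarith [(hpos t ht).2]⟩
  have key := anti_of_deriv (f := fun t => t - C / v * (uu a v t / sin (phi a v t)) + B * psi a v t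
        - A / (2 - r^2) * (psi a v t / (2 * cos (phi a v t / 2))))
    (f' := fun t => 1 - C / v * ((-cos (phi a v t) * yy a v t * sin (phi a v t)
          - uu a v t * (cos (phi a v t) * psi a v t)) / (sin (phi a v t))^2) + B * (-sin (phi a v t))
        - A / (2 - r^2) * ((-sin (phi a v t) * (2 * cos (phi a v t / 2))
          - psi a v t * (2 * (- sin (phi a v t / 2) * (psi a v t / 2)))) / (2 * cos (phi a v t / 2))^2)) ht1
    (fun t ht => (((hasDerivAt_id t).sub (((uu_deriv a v t).div (phi_deriv a v t).sin (hsin t ht).ne').const_mul _)).add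
        ((psi_deriv a v t).const_mul _)).sub
        (((psi_deriv a v t).div (((phi_deriv a v t).div_const 2).cos.const_mul 2)
          (by have := hW t ht; positivity)).const_mul _))
    (fun t ht => by
      have hs := hsin t ht
      have hw := hW t ht
      have hsc : 0 < sin (phi a v t / 2) :=
        sin_pos_of_pos_of_lt_pi (by linarith [(hpos t ht).1, pi_pos]) (by linarith [(hpos t ht).2, pi_pos])
      set W := 2 * cos (phi a v t / 2) with hWd
      set c := sin (phi a v t / 2) with hc
      have hWp : 0 < W := by rw [hWd]; positivity
      have es : sin (phi a v t) = W * c := by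
        rw [show phi a v t = 2 * (phi a v t / 2) by ring, sin_two_mul]
        rw [hWd, hc]; ring_nf
      have ecos : cos (phi a v t) = W^2/2 - 1 := by
        rw [show phi a v t = 2 * (phi a v t / 2) by ring, cos_two_mul]
        rw [hWd]; ring_nf
      have hcc : c^2 = 1 - W^2/4 := by
        have := sin_sq_add_cos_sq (phi a v t / 2)
        rw [hWd]; linarith
      have hcn : cos (phi a v t) ≤ 0 := cos_nonpos_of_pi_div_two_le_of_le (hpos t ht).1 (by linarith [(hpos t ht).2, pi_pos])
      have hW2 : W^2 ≤ 2 := by linarith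
      have i1 := numI W c hWp hW2 hsc hcc
      have i2 := numII W c hWp hW2 hsc hcc
      have e1 : -cos (phi a v t) * yy a v t * sin (phi a v t)
          - uu a v t * (cos (phi a v t) * psi a v t) = - cos (phi a v t) * v := by
        linear_combination (- cos (phi a v t)) * wronskian a v t
      have e2 : -sin (phi a v t) * W - psi a v t * (2 * (- c * (psi a v t / 2)))
          = - (2 - r^2) * c := by
        rw [es]
        have := hen t
        rw [ecos] at this
        linear_combination c * this
      rw [e1, e2, es, ecos]
      have e3 : 1 - C / v * (-(W^2/2-1) * v / (W*c)^2) + B * (-(W*c)) - A / (2 - r^2) * (-(2-r^2) * c / W^2)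
         = (W^2 - c * (0.25 + 0.915 * W^3)) / W^2 
           + C / (W^2 * c^2) * ((0.99 - 0.355 * W^3) * c^3 - (1 - W^2/2)) := by
        rw [hA, hB]
        field_simp
        ring
      rw [e3]
      have j1 : (W^2 - c * (0.25 + 0.915 * W^3)) / W^2 ≤ 0 :=
        div_nonpos_of_nonpos_of_nonneg (by linarith) (by positivity)
      have j2 : C / (W^2 * c^2) * ((0.99 - 0.355 * W^3) * c^3 - (1 - W^2/2)) ≤ 0 :=
        mul_nonpos_of_nonneg_of_nonpos (by positivity) (by linarith)
      linarith)
  have hw1 := wronskian a v t1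
  simp only [hend, hr, sin_pi_div_two] at key
  rw [hend, hr, sin_pi_div_two] at hw1
  have e4 : 2 * cos (π / 2 / 2) = √2 := by
    rw [show π/2/2 = π/4 by ring, cos_pi_div_four]; ring
  rw [e4] at key
  have e5 : C / v * (uu a v t1 / 1) = C * ((1 - yy a v t1 / v) / r) := by
    field_simp
    linear_combination C * hw1
  have e6 : C / v * (uu a v T / sin (phi a v T)) = C * (uu a v T / v / sin (phi a v T)) := by
    field_simp
  rw [e5, e6] at key
  exact key

set_option maxHeartbeats 2000000 in
/-- The key inequality. -/
lemma key_ineq {a v t1 T : ℝ} (ha : a ∈ Icc (-1:ℝ) 1) (ht0 : 0 ≤ t1) (ht1 : t1 ≤ T) (hT : 0 < T) (hv : 0 < v)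
    (hpos1 : ∀ t ∈ Icc 0 t1, 0 < psi a v t ∧ |phi a v t| ≤ π/2) (hend : phi a v t1 = π/2)
    (hpos2 : ∀ t ∈ Icc t1 T, π/2 ≤ phi a v t ∧ phi a v t < π)
    (hE : v^2/2 - cos a - 1 < 0) (hb : π - 1 ≤ phi a v T) (hw : psi a v T < 0) :
    0 < yy a v T ∧ 2 * (v^2/2 - cos a - 1) - 2/3 < T * (v * psi a v T / yy a v T) := by
  set r := psi a v t1 with hr
  have hrp : 0 < r := (hpos1 t1 ⟨ht0, le_rfl⟩).1
  have e0 := energy_const a v t1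
  rw [hend, cos_pi_div_two, ← hr] at e0
  have hr2 : r^2 < 2 := by linarith
  set C := 8/3 - r^2 with hC
  have hCp : 0 < C := by rw [hC]; linarith
  set rs := √(r^2+2) with hrs
  have hrsp : 0 < rs := Real.sqrt_pos.2 (by positivity)
  have hrs2 : rs^2 = r^2 + 2 := Real.sq_sqrt (by positivity)
  have s1 := seg1 ha ht0 hv hpos1 hend hr.symm hrsp hrs2 hCp.le
  have s2 := seg2 ht1 hv hpos2 hend hr.symm hrp hr2 hCp.le
  set w := - psi a v T with hwd
  have hwp : 0 < w := by linarith
  have hpw : psi a v T = - w := by rw [hwd]; ring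
  set b := phi a v T with hbd
  have hbl : b < π := (hpos2 T ⟨ht1, le_rfl⟩).2
  have hsb : 0 < sin b := sin_pos_of_pos_of_lt_pi (by linarith [pi_gt_three]) hbl
  have hsb1 : sin b ≤ 0.843 := by
    rw [← sin_pi_sub]
    exact (sin_le_sin_of_le_of_le_pi_div_two (by linarith [pi_pos]) (by linarith [pi_gt_three]) (by linarith : π - b ≤ 1)).trans sin_one_bd.2
  have hcb : cos b ≤ - 0.54 := by
    have h1 : cos 1 ≤ cos (π - b) := cos_le_cos_of_nonneg_of_le_pi (by linarith) (by linarith [pi_gt_three]) (by linarith)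
    rw [cos_pi_sub] at h1
    linarith [cos_one_bd.1]
  have eT := energy_const a v T
  rw [hpw, ← hbd] at eT
  have hw2 : w^2 ≤ r^2 - 1.08 := by norm_num at hcb ⊢; nlinarith
  have hu : 1.08 ≤ r^2 := by nlinarith
  have hWb : 0 < 2 * cos (b/2) := by
    have := cos_pos_of_mem_Ioo (x := b/2) ⟨by linarith [pi_gt_three], by linarith⟩
    positivity
  have hWb2 : (2 * cos (b/2))^2 ≤ 0.92 := by
    have : cos b = 2 * cos (b/2)^2 - 1 := by rw [← cos_two_mul]; ring_nf
    norm_num at hcb ⊢; nlinarith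
  have nB := numBracket r C _ hr2 hu hC hWb hWb2
  have nF := numFinal r w (sin b) _ _ C rs hrp hr2 hwp hw2 hsb hsb1 hC hrsp hrs2 rfl rfl
  have wr := wronskian a v T
  rw [hpw, ← hbd] at wr
  rw [hpw] at s2
  -- combine
  have eq1 : C * ((1 - yy a v t1 / v) / r) = C / r - C * (yy a v t1 / v) / r := by ring
  have eq2 : (0.99 * C - 0.25) / (2 - r^2) * (-w / (2 * cos (b/2)))
      = - w * ((0.99 * C - 0.25) / (2 - r^2) / (2 * cos (b/2))) := by ring
  rw [eq1, eq2] at s2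
  have m1 := mul_le_mul_of_nonneg_left nB hwp.le
  have main : T - C * (uu a v T / v / sin b) < C / (w * sin b) := by linarith
  have hz : C * (yy a v T / v) = C / sin b + w * C * (uu a v T / v / sin b) := by
    field_simp
    linear_combination wr
  have m2 := mul_lt_mul_of_pos_left main hwp
  have e7 : w * (C / (w * sin b)) = C / sin b := by field_simp
  rw [e7] at m2
  have fin : T * w < C * (yy a v T / v) := by rw [hz]; linarith
  have hyp : 0 < yy a v T := by
    have : 0 < C * (yy a v T / v) := lt_trans (by positivity) fin
    have h3 := (pos_iff_pos_of_mul_pos this).1 hCp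
    rcases div_pos_iff.1 h3 with h | h
    · exact h.1
    · linarith [h.2]
  refine ⟨hyp, ?_⟩
  have e8 : 2 * (v^2/2 - cos a - 1) - 2/3 = - C := by rw [hC]; linarith
  rw [e8, hpw]
  have e9 : T * (v * -w / yy a v T) = - (T * w * v) / yy a v T := by ring
  rw [e9, lt_div_iff₀ hyp]
  have : T * w * v < C * yy a v T := by
    have := mul_lt_mul_of_pos_right fin hv
    have e10 : C * (yy a v T / v) * v = C * yy a v T := by field_simp
    linarith
  linarith


lemma phi_cont (a v : ℝ) : Continuous (phi a v) :=
  continuous_iff_continuousAt.2 fun t => (phi_deriv a v t).continuousAt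
lemma psi_cont (a v : ℝ) : Continuous (psi a v) :=
  continuous_iff_continuousAt.2 fun t => (psi_deriv a v t).continuousAt

lemma first_hit {f : ℝ → ℝ} (hf : Continuous f) {c T : ℝ} (hT : 0 ≤ T) (h0 : f 0 < c) (h1 : c ≤ f T) :
    ∃ s ∈ Icc 0 T, f s = c ∧ ∀ t ∈ Ico 0 s, f t < c := by
  set K := Icc 0 T ∩ f ⁻¹' (Ici c) with hK
  have hKc : IsCompact K := isCompact_Icc.inter_right (isClosed_Ici.preimage hf)
  have hKn : K.Nonempty := ⟨T, ⟨hT, le_rfl⟩, h1⟩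
  have hs := hKc.sInf_mem hKn
  set s := sInf K
  have hlt : ∀ t ∈ Ico 0 s, f t < c := by
    intro t ht
    by_contra hh
    push Not at hh
    have : s ≤ t := csInf_le hKc.bddBelow ⟨⟨ht.1, ht.2.le.trans hs.1.2⟩, hh⟩
    linarith [ht.2]
  refine ⟨s, hs.1, ?_, hlt⟩
  apply le_antisymm _ hs.2
  by_contra hh
  push Not at hh
  obtain ⟨m, hm, hmc⟩ := intermediate_value_Icc hs.1.1 hf.continuousOn ⟨h0.le, hh.le⟩
  rcases eq_or_lt_of_le hm.2 with h | h
  · rw [h] at hmc; linarith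
  · linarith [hlt m ⟨hm.1, h⟩]

lemma sign_keep {f : ℝ → ℝ} (hf : Continuous f) {T : ℝ} (h : ∀ t ∈ Icc 0 T, f t ≠ 0) (h0 : 0 < f 0) :
    ∀ t ∈ Icc 0 T, 0 < f t := by
  intro t ht
  by_contra hh
  push Not at hh
  obtain ⟨m, hm, hmc⟩ := intermediate_value_Icc' ht.1 hf.continuousOn ⟨hh, h0.le⟩
  exact h m ⟨hm.1, hm.2.trans ht.2⟩ hmc

lemma phi_mono {a v s t : ℝ} (hst : s ≤ t) (h : ∀ r ∈ Icc s t, 0 ≤ psi a v r) :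
    phi a v s ≤ phi a v t := mono_of_deriv hst (fun r _ => phi_deriv a v r) h

lemma phi_anti {a v s t : ℝ} (hst : s ≤ t) (h : ∀ r ∈ Icc s t, psi a v r ≤ 0) :
    phi a v t ≤ phi a v s := anti_of_deriv hst (fun r _ => phi_deriv a v r) h

lemma psi_sq (a v t : ℝ) : (psi a v t)^2 = 2 * (v^2/2 - cos a - 1) + 2 * (1 + cos (phi a v t)) := by
  linarith [energy_const a v t]

lemma yy_pos_of_psi_pos {a v T : ℝ} (hT : 0 < T) (h : ∀ t ∈ Icc 0 T, 0 < psi a v t) : 0 < yy a v T := by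
  have hv : 0 < v := by have := h 0 ⟨le_rfl, hT.le⟩; rwa [psi_zero] at this
  have hpT := h T ⟨hT.le, le_rfl⟩
  set M := v^2/2 - cos a + 1 with hM
  have hMp : 0 < M := by have := cos_le_one a; rw [hM]; nlinarith
  have key := mono_of_deriv (f := fun t => yy a v t / psi a v t - v / (2*M) * t)
    (f' := fun t => v / (psi a v t)^2 - v / (2*M) * 1) hT.le
    (fun t ht => (yv_deriv a v t (h t ht).ne').sub ((hasDerivAt_id t).const_mul _))
    (fun t ht => by
      have hp := h t ht
      have : v / (2*M) ≤ v / (psi a v t)^2 := by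
        apply div_le_div_of_nonneg_left hv.le (by positivity)
        rw [psi_sq]; linarith [cos_le_one (phi a v t)]
      linarith)
  simp only [yy_zero, zero_div, mul_zero] at key
  have h2 : 0 < v / (2*M) * T := by positivity
  have h3 : 0 < yy a v T / psi a v T := by linarith
  rcases div_pos_iff.1 h3 with h | h
  · exact h.1
  · linarith [h.2]

/-- positive energy: sign of velocity -/
lemma epos_psi {a v : ℝ} (hE : 0 < v^2/2 - cos a - 1) (hv : 0 < v) (t : ℝ) (ht : 0 ≤ t) : 0 < psi a v t := by
  apply sign_keep (psi_cont a v) (T := t) _ (by rwa [psi_zero]) t ⟨ht, le_rfl⟩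
  intro s _ hs
  have := psi_sq a v s
  rw [hs] at this
  nlinarith [neg_one_le_cos (phi a v s)]

lemma epos_v {a v T : ℝ} (hE : 0 < v^2/2 - cos a - 1) (hT : 0 ≤ T) (hab : a < phi a v T) : 0 < v := by
  by_contra hh
  push Not at hh
  have hv0 : v ≠ 0 := by
    rintro rfl
    nlinarith [neg_one_le_cos a]
  have hv : 0 < -v := by
    have := lt_of_le_of_ne hh hv0
    linarith
  have h1 : ∀ t, 0 ≤ t → psi a v t ≤ 0 := by
    intro t ht
    have := epos_psi (a := -a) (v := -v) (by rw [cos_neg]; nlinarith) hv t ht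
    rw [(phi_neg a v t).2] at this
    linarith
  have := phi_anti (a := a) (v := v) hT (fun r hr => h1 r hr.1)
  rw [phi_zero] at this
  linarith

lemma epos_D {a v T : ℝ} (hE : 0 < v^2/2 - cos a - 1) (hT : 0 < T) (hv : 0 < v) :
    0 < yy a v T ∧ 2 * (v^2/2 - cos a - 1) ≤ T * (v * psi a v T / yy a v T) := by
  have hp : ∀ t ∈ Icc 0 T, 0 < psi a v t := fun t ht => epos_psi hE hv t ht.1
  have hy := yy_pos_of_psi_pos hT hp
  refine ⟨hy, ?_⟩
  set E := v^2/2 - cos a - 1 with hEd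
  have hpT := hp T ⟨hT.le, le_rfl⟩
  have key := anti_of_deriv (f := fun t => yy a v t / psi a v t - v / (2*E) * t)
    (f' := fun t => v / (psi a v t)^2 - v / (2*E) * 1) hT.le
    (fun t ht => (yv_deriv a v t (hp t ht).ne').sub ((hasDerivAt_id t).const_mul _))
    (fun t ht => by
      have hp := hp t ht
      have : v / (psi a v t)^2 ≤ v / (2*E) := by
        apply div_le_div_of_nonneg_left hv.le (by positivity)
        rw [psi_sq]; linarith [neg_one_le_cos (phi a v t)]
      linarith)
  simp only [yy_zero, zero_div, mul_zero] at key
  have k2 : yy a v T / psi a v T ≤ v / (2*E) * T := by linarith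
  rw [div_le_iff₀ hpT] at k2
  rw [← mul_div_assoc, le_div_iff₀ hy]
  have := mul_le_mul_of_nonneg_left k2 (by positivity : 0 ≤ 2 * E)
  have e : 2 * E * (v / (2*E) * T * psi a v T) = T * (v * psi a v T) := by field_simp
  linarith

lemma energy_bds {a v T : ℝ} (hT : 0 < T) :
    (phi a v T - a)^2 / (2*T^2) - 2 ≤ v^2/2 - cos a - 1 ∧ v^2/2 - cos a - 1 ≤ (phi a v T - a)^2 / (2*T^2) := by
  obtain ⟨s, _, hs⟩ := exists_hasDerivAt_eq_slope (phi a v) (psi a v) hT (phi_cont a v).continuousOn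
    (fun t _ => phi_deriv a v t)
  rw [phi_zero, sub_zero] at hs
  have h2 := psi_sq a v s
  rw [hs] at h2
  have e : (phi a v T - a)^2 / (2*T^2) = ((phi a v T - a)/T)^2/2 := by field_simp
  rw [e]
  constructor <;> linarith [neg_one_le_cos (phi a v s), cos_le_one (phi a v s)]

lemma P_epos {a v T : ℝ} (hT : 0 < T) (hab : a < phi a v T) (k : ℤ) (h1 : a ≤ (2*k+1)*π)
    (h2 : (2*k+1)*π ≤ phi a v T) : 0 < v^2/2 - cos a - 1 := by
  obtain ⟨s, hs, hsk⟩ := intermediate_value_Icc hT.le (phi_cont a v).continuousOn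
    (show (2*k+1)*π ∈ Icc (phi a v 0) (phi a v T) by rw [phi_zero]; exact ⟨h1, h2⟩)
  have hc : cos (phi a v s) = -1 := by
    rw [hsk, show (2*(k:ℝ)+1)*π = π + k * (2*π) by ring, cos_add_int_mul_two_pi, cos_pi]
  have hsn : sin (phi a v s) = 0 := by
    rw [hsk, show (2*(k:ℝ)+1)*π = π + k * (2*π) by ring, sin_add_int_mul_two_pi, sin_pi]
  have h3 := psi_sq a v s
  rw [hc] at h3
  have h4 : psi a v s ≠ 0 := by
    intro h0
    have := (phi_eq_of_rest hsn h0).2 T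
    linarith
  have : 0 < (psi a v s)^2 := by positivity
  linarith

lemma cos_gt_of {x : ℝ} (h1 : -2 ≤ x) (h2 : x ≤ π/2) : - cos 1 < cos x := by
  rw [← cos_pi_sub, ← cos_abs x]
  apply cos_lt_cos_of_nonneg_of_le_pi (abs_nonneg x) (by linarith)
  rw [abs_lt]; constructor <;> linarith [pi_gt_d2]

/-- nonpositive energy analysis, kind N -/
lemma N_nonpos {a v T : ℝ} (hT : 0 < T) (ha : a ∈ Icc (-1:ℝ) 1) (hb : π - 1 ≤ phi a v T)
    (hx : ∀ t ∈ Icc 0 T, -2 < phi a v t) (hE : v^2/2 - cos a - 1 ≤ 0) :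
    0 < v ∧ 0 < yy a v T ∧ 2 * (v^2/2 - cos a - 1) - 2/3 < T * (v * psi a v T / yy a v T) ∧
      ∀ t ∈ Icc 0 T, a ≤ phi a v t ∧ phi a v t < π := by
  have hpi := pi_gt_d2
  have hlt : ∀ t, 0 ≤ t → phi a v t < π := by
    intro t ht
    by_contra hh
    push Not at hh
    obtain ⟨s, _, hs⟩ := intermediate_value_Icc ht (phi_cont a v).continuousOn
      (show π ∈ Icc (phi a v 0) (phi a v t) by rw [phi_zero]; exact ⟨by linarith [ha.2], hh⟩)
    have h3 := psi_sq a v s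
    rw [hs, cos_pi] at h3
    have h0 : psi a v s = 0 := by nlinarith
    have := (phi_eq_of_rest (by rw [hs, sin_pi]) h0).2 s
    linarith [ha.2]
  have hEl : cos 1 ≤ v^2/2 - cos a := by
    have h1 : cos 1 ≤ cos (π - phi a v T) := cos_le_cos_of_nonneg_of_le_pi (by linarith [hlt T hT.le]) (by linarith) (by linarith)
    rw [cos_pi_sub] at h1
    have := energy_const a v T
    nlinarith [sq_nonneg (psi a v T)]
  have hne : ∀ t, -2 ≤ phi a v t → phi a v t ≤ π/2 → psi a v t ≠ 0 := by
    intro t h1 h2 h0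
    have h3 := psi_sq a v t
    rw [h0] at h3
    have := cos_gt_of h1 h2
    nlinarith
  have hv : 0 < v := by
    by_contra hh
    push Not at hh
    have hv0 : v ≠ 0 := by
      have := hne 0 (by rw [phi_zero]; linarith [ha.1]) (by rw [phi_zero]; linarith [ha.2])
      rwa [psi_zero] at this
    have hvn : v < 0 := lt_of_le_of_ne hh hv0
    have hneg : ∀ t ∈ Icc 0 T, psi a v t < 0 := by
      intro t ht
      by_contra h1
      push Not at h1
      obtain ⟨s, hs, hs0, hsl⟩ := first_hit (psi_cont a v) ht.1 (by rwa [psi_zero]) h1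
      have hle : phi a v s ≤ phi a v 0 := by
        apply phi_anti hs.1
        intro r hr
        rcases eq_or_lt_of_le hr.2 with h | h
        · rw [h, hs0]
        · exact (hsl r ⟨hr.1, h⟩).le
      rw [phi_zero] at hle
      exact hne s (hx s ⟨hs.1, hs.2.trans ht.2⟩).le (by linarith [ha.2]) hs0
    have := phi_anti hT.le (fun r hr => (hneg r hr).le)
    rw [phi_zero] at this
    linarith [ha.2]
  obtain ⟨t1, ht1, hend, hbef⟩ := first_hit (phi_cont a v) (c := π/2) hT.le
    (by rw [phi_zero]; linarith [ha.2]) (by linarith)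
  have hbef' : ∀ t ∈ Icc 0 t1, phi a v t ≤ π/2 := by
    intro t ht
    rcases eq_or_lt_of_le ht.2 with h | h
    · rw [h, hend]
    · exact (hbef t ⟨ht.1, h⟩).le
  have hp1 : ∀ t ∈ Icc 0 t1, 0 < psi a v t :=
    sign_keep (psi_cont a v) (fun t ht => hne t (hx t ⟨ht.1, ht.2.trans ht1.2⟩).le (hbef' t ht)) (by rwa [psi_zero])
  have hge1 : ∀ t ∈ Icc 0 t1, a ≤ phi a v t := by
    intro t ht
    have := phi_mono (a := a) (v := v) ht.1 (fun r hr => (hp1 r ⟨hr.1, hr.2.trans ht.2⟩).le)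
    rwa [phi_zero] at this
  have hge2 : ∀ t ∈ Icc t1 T, π/2 ≤ phi a v t := by
    intro t ht
    by_contra hh
    push Not at hh
    obtain ⟨m, hm, hmin⟩ := isCompact_Icc.exists_isMinOn (⟨t, ht⟩ : (Icc t1 T).Nonempty) (phi_cont a v).continuousOn
    have hmt : phi a v m ≤ phi a v t := hmin ht
    have hm1 : m ≠ t1 := by rintro rfl; linarith
    have hm2 : m ≠ T := by rintro rfl; linarith
    have hmI : m ∈ Ioo t1 T := ⟨lt_of_le_of_ne hm.1 hm1.symm, lt_of_le_of_ne hm.2 hm2⟩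
    have hloc : IsLocalMin (phi a v) m := hmin.isLocalMin (Icc_mem_nhds hmI.1 hmI.2)
    exact hne m (hx m ⟨ht1.1.trans hm.1, hm.2⟩).le (by linarith) (hloc.hasDerivAt_eq_zero (phi_deriv a v m))
  have hconf : ∀ t ∈ Icc 0 T, a ≤ phi a v t ∧ phi a v t < π := by
    intro t ht
    refine ⟨?_, hlt t ht.1⟩
    rcases le_total t t1 with h | h
    · exact hge1 t ⟨ht.1, h⟩
    · linarith [hge2 t ⟨h, ht.2⟩, ha.2]
  refine ⟨hv, ?_⟩
  rw [← and_assoc]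
  refine ⟨?_, hconf⟩
  rcases lt_trichotomy (psi a v T) 0 with h | h | h
  · have hE' : v^2/2 - cos a - 1 < 0 := by
      refine lt_of_le_of_ne hE ?_
      intro h0
      have : ∀ t ∈ Icc 0 T, psi a v t ≠ 0 := by
        intro t ht hh
        have h3 := psi_sq a v t
        rw [h0, hh] at h3
        have h4 : cos π < cos (|phi a v t|) := by
          apply cos_lt_cos_of_nonneg_of_le_pi (abs_nonneg _) le_rfl
          rw [abs_lt]; constructor <;> linarith [hconf t ht, ha.1]
        rw [cos_abs, cos_pi] at h4
        nlinarith
      linarith [sign_keep (psi_cont a v) this (by rwa [psi_zero]) T ⟨hT.le, le_rfl⟩]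
    exact key_ineq ha ht1.1 ht1.2 hT hv
      (fun t ht => ⟨hp1 t ht, abs_le.2 ⟨by linarith [hge1 t ht, ha.1], hbef' t ht⟩⟩) hend
      (fun t ht => ⟨hge2 t ht, hlt t (ht1.1.trans ht.1)⟩) hE' hb h
  · have w := wronskian a v T
    rw [h, mul_zero, zero_add] at w
    have hs : 0 < sin (phi a v T) := sin_pos_of_pos_of_lt_pi (by linarith) (hlt T hT.le)
    have hy : 0 < yy a v T := by
      by_contra hh
      push Not at hh
      nlinarith
    refine ⟨hy, ?_⟩
    rw [h]; simp only [mul_zero, zero_div]; linarith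
  · have hp : ∀ t ∈ Icc 0 T, 0 < psi a v t := by
      intro t ht
      rcases le_total t t1 with h1 | h1
      · exact hp1 t ⟨ht.1, h1⟩
      · have := anti_of_deriv (f := psi a v) ht.2 (fun s _ => psi_deriv a v s) (fun s hs => by
          have := sin_nonneg_of_nonneg_of_le_pi (x := phi a v s) (by linarith [hge2 s ⟨h1.trans hs.1, hs.2⟩]) (hlt s (ht.1.trans hs.1)).le
          linarith)
        linarith
    have hy := yy_pos_of_psi_pos hT hp
    refine ⟨hy, ?_⟩
    have : 0 < T * (v * psi a v T / yy a v T) := by positivity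
    linarith


lemma phi_cont3 : Continuous (fun p : ℝ × ℝ × ℝ => phi p.1 p.2.1 p.2.2) := phi_contDiff.continuous

lemma tube {a v T : ℝ} (hT : 0 < T) (h : ∀ t ∈ Icc 0 T, -2 < phi a v t) :
    ∀ᶠ p : ℝ × ℝ × ℝ in 𝓝 (a, v, T), ∀ t ∈ Icc 0 p.2.2, -2 < phi p.1 p.2.1 t := by
  have h1 : ∀ᶠ p : ℝ × ℝ × ℝ in 𝓝 (a, v, T), ∀ s ∈ Icc (0:ℝ) 1, -2 < phi p.1 p.2.1 (s * p.2.2) := by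
    apply (isCompact_Icc (a := (0:ℝ)) (b := 1)).eventually_forall_of_forall_eventually
    intro s hs
    have hc : Continuous (fun z : (ℝ × ℝ × ℝ) × ℝ => phi z.1.1 z.1.2.1 (z.2 * z.1.2.2)) :=
      phi_cont3.comp (f := fun z : (ℝ × ℝ × ℝ) × ℝ => (z.1.1, z.1.2.1, z.2 * z.1.2.2)) (by fun_prop)
    have := hc.continuousAt (x := ((a, v, T), s))
    apply this.eventually (lt_mem_nhds (a := -2) _)
    exact h _ ⟨mul_nonneg hs.1 hT.le, by nlinarith [hs.2]⟩
  have h2 : ∀ᶠ p : ℝ × ℝ × ℝ in 𝓝 (a, v, T), 0 < p.2.2 := by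
    have hc : Continuous (fun p : ℝ × ℝ × ℝ => p.2.2) := by fun_prop
    exact hc.continuousAt.eventually (lt_mem_nhds hT)
  filter_upwards [h1, h2] with p hp hp2 t ht
  have := hp (t / p.2.2) ⟨div_nonneg ht.1 hp2.le, (div_le_one hp2).2 ht.2⟩
  rwa [div_mul_cancel₀ _ hp2.ne'] at this

lemma tube_v {a v T : ℝ} (hT : 0 < T) (h : ∀ t ∈ Icc 0 T, -2 < phi a v t) :
    ∀ᶠ v' in 𝓝 v, ∀ t ∈ Icc 0 T, -2 < phi a v' t := by
  have hc : Continuous (fun v' : ℝ => ((a, v', T) : ℝ × ℝ × ℝ)) := by fun_prop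
  exact hc.continuousAt.eventually (tube hT h)

lemma psi_lower (a v t : ℝ) (ht : 0 ≤ t) : v - t ≤ psi a v t := by
  have := mono_of_deriv (f := fun t => psi a v t + t) (f' := fun t => -sin (phi a v t) + 1) ht
    (fun s _ => (psi_deriv a v s).add (hasDerivAt_id s)) (fun s _ => by linarith [sin_le_one (phi a v s)])
  simp only [psi_zero] at this
  linarith

lemma phi_lower {a v T : ℝ} (hT : 0 ≤ T) : a + (v - T) * T ≤ phi a v T := by
  have := mono_of_deriv (f := fun t => phi a v t - (v - T) * t) (f' := fun t => psi a v t - (v - T) * 1) hT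
    (fun s _ => (phi_deriv a v s).sub ((hasDerivAt_id s).const_mul _)) (fun s hs => by
      linarith [psi_lower a v s hs.1, hs.2])
  simp only [phi_zero] at this
  linarith

lemma g_cont (a T : ℝ) : Continuous (fun v => phi a v T) :=
  continuous_iff_continuousAt.2 fun v => (phi_dv a v T).continuousAt

lemma g_strict {a T v1 v2 : ℝ} (h : v1 < v2) (hy : ∀ v ∈ Icc v1 v2, 0 < yy a v T) : phi a v1 T < phi a v2 T := by
  have : StrictMonoOn (fun v => phi a v T) (Icc v1 v2) := by
    apply strictMonoOn_of_deriv_pos (convex_Icc _ _) (g_cont a T).continuousOn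
    intro v hv
    rw [interior_Icc] at hv
    exact hy v (Ioo_subset_Icc_self hv)
  exact this (left_mem_Icc.2 h.le) (right_mem_Icc.2 h.le) h

lemma P_exists {a b T : ℝ} (hT : 0 < T) (hab : a < b) (k : ℤ) (h1 : a ≤ (2*k+1)*π) (h2 : (2*k+1)*π ≤ b) :
    ∃ v, phi a v T = b := by
  have h0 : phi a 0 T ≤ b := by
    by_contra hh
    push Not at hh
    have := P_epos (v := 0) hT (by linarith) k h1 (by linarith)
    linarith [neg_one_le_cos a]
  have hL : b ≤ phi a (T + (b-a)/T) T := by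
    have := phi_lower (a := a) (v := T + (b-a)/T) hT.le
    have e : a + (T + (b-a)/T - T) * T = b := by field_simp; ring
    linarith
  have hle : 0 ≤ T + (b-a)/T := by
    have : 0 < b - a := by linarith
    positivity
  obtain ⟨v, _, hv⟩ := intermediate_value_Icc hle (g_cont a T).continuousOn ⟨h0, hL⟩
  exact ⟨v, hv⟩

lemma P_unique {a b T v1 v2 : ℝ} (hT : 0 < T) (hab : a < b) (k : ℤ) (h1 : a ≤ (2*k+1)*π) (h2 : (2*k+1)*π ≤ b)
    (e1 : phi a v1 T = b) (e2 : phi a v2 T = b) : v1 = v2 := by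
  wlog h : v1 < v2 generalizing v1 v2
  · rcases eq_or_lt_of_le (not_lt.1 h) with h' | h'
    · exact h'.symm
    · exact (this e2 e1 h').symm
  have hE := P_epos (a := a) (v := v1) hT (by rw [e1]; exact hab) k h1 (by rw [e1]; exact h2)
  have hv := epos_v hE hT.le (by rw [e1]; exact hab)
  have := g_strict (a := a) (T := T) h (fun v hv' => (epos_D (a := a) (v := v) (by nlinarith [hv'.1]) hT (by linarith [hv'.1])).1)
  linarith

lemma E_lower {a v T : ℝ} (hT : 0 ≤ T) (ha : a ∈ Icc (-1:ℝ) 1) (hb : π - 1 ≤ phi a v T) :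
    cos 1 ≤ v^2/2 - cos a := by
  have hpi := pi_gt_three
  rcases le_total (phi a v T) π with h | h
  · have h1 : cos 1 ≤ cos (π - phi a v T) := cos_le_cos_of_nonneg_of_le_pi (by linarith) (by linarith) (by linarith)
    rw [cos_pi_sub] at h1
    have := energy_const a v T
    nlinarith [sq_nonneg (psi a v T)]
  · obtain ⟨s, _, hs⟩ := intermediate_value_Icc hT (phi_cont a v).continuousOn
      (show π ∈ Icc (phi a v 0) (phi a v T) by rw [phi_zero]; exact ⟨by linarith [ha.2], h⟩)
    have := energy_const a v s
    rw [hs, cos_pi] at this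
    nlinarith [sq_nonneg (psi a v s), cos_le_one (1:ℝ)]

def NA (a T : ℝ) : Set ℝ := {v | (∀ t ∈ Icc 0 T, -2 < phi a v t) ∧ π - 1 ≤ phi a v T}

lemma NA_pos {a T v : ℝ} (hT : 0 < T) (ha : a ∈ Icc (-1:ℝ) 1) (h : v ∈ NA a T) : 0 < v ∧ 0 < yy a v T := by
  rcases le_or_gt (v^2/2 - cos a - 1) 0 with hE | hE
  · have := N_nonpos hT ha h.2 h.1 hE
    exact ⟨this.1, this.2.1⟩
  · have hv := epos_v hE hT.le (by linarith [h.2, pi_gt_three, ha.2])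
    exact ⟨hv, (epos_D hE hT hv).1⟩

lemma NA_closed {a T : ℝ} (hT : 0 < T) (ha : a ∈ Icc (-1:ℝ) 1) : IsClosed (NA a T) := by
  have e : NA a T = (⋂ t ∈ Icc 0 T, {v | -2 ≤ phi a v t}) ∩ {v | π - 1 ≤ phi a v T} := by
    ext v
    simp only [NA, mem_ofPred_eq, mem_inter_iff, mem_iInter]
    constructor
    · exact fun h => ⟨fun t ht => (h.1 t ht).le, h.2⟩
    · rintro ⟨h1, h2⟩
      refine ⟨fun s hs => lt_of_le_of_ne (h1 s hs) ?_, h2⟩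
      intro h0
      have hpi := pi_gt_d2
      have hs1 : s ≠ 0 := by rintro rfl; rw [phi_zero] at h0; linarith [ha.1]
      have hs2 : s ≠ T := by rintro rfl; linarith
      have hI : Icc 0 T ∈ 𝓝 s := Icc_mem_nhds (lt_of_le_of_ne hs.1 hs1.symm) (lt_of_le_of_ne hs.2 hs2)
      have hloc : IsLocalMin (phi a v) s := by
        filter_upwards [hI] with t ht
        rw [← h0]; exact h1 t ht
      have hp0 := hloc.hasDerivAt_eq_zero (phi_deriv a v s)
      have := energy_const a v s
      rw [hp0, ← h0] at this
      have h3 := E_lower hT.le ha h2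
      have := cos_gt_of (x := -2) le_rfl (by linarith)
      nlinarith
  rw [e]
  refine IsClosed.inter (isClosed_biInter fun t _ => ?_) ?_
  · exact isClosed_le continuous_const (g_cont a t)
  · exact isClosed_le continuous_const (g_cont a T)

lemma NA_up {a T v v' : ℝ} (hT : 0 < T) (ha : a ∈ Icc (-1:ℝ) 1) (h : v ∈ NA a T) :
    Icc v v' ⊆ NA a T := by
  apply IsClosed.Icc_subset_of_forall_exists_gt ((NA_closed hT ha).inter isClosed_Icc) h
  intro x hx y hy
  have hyy := (NA_pos hT ha hx.1).2
  have h1 := tube_v hT hx.1.1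
  have h2 : ∀ᶠ z in 𝓝[>] x, phi a x T < phi a z T := by
    have hd := (phi_dv a x T).hasDerivWithinAt (s := Ioi x)
    have hs := (hasDerivWithinAt_iff_tendsto_slope' (by simp)).1 hd
    have := hs.eventually (lt_mem_nhds hyy)
    filter_upwards [this, self_mem_nhdsWithin] with z hz hz2
    rw [slope_def_field] at hz
    have : 0 < z - x := sub_pos.2 hz2
    rcases div_pos_iff.1 hz with h | h
    · linarith [h.1]
    · linarith [h.2]
  have h3 : ∀ᶠ z in 𝓝[>] x, z ∈ Ioc x y := Ioc_mem_nhdsGT hy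
  obtain ⟨z, hz1, hz2, hz3⟩ := ((h1.filter_mono nhdsWithin_le_nhds).and (h2.and h3)).exists
  exact ⟨z, ⟨hz1, hx.1.2.trans hz2.le⟩, hz3⟩

lemma N_exists {a b T : ℝ} (hT : 0 < T) (ha : a ∈ Icc (-1:ℝ) 1) (hb : π - 1 ≤ b) :
    ∃ v, phi a v T = b ∧ ∀ t ∈ Icc 0 T, -2 < phi a v t := by
  have hpi := pi_gt_three
  set vL := T + (b-a)/T with hvL
  have hba : 0 < b - a := by linarith [ha.2]
  have hL : b ≤ phi a vL T := by
    have := phi_lower (a := a) (v := vL) hT.le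
    have e : a + (vL - T) * T = b := by rw [hvL]; field_simp; ring
    linarith
  have hLm : vL ∈ NA a T := by
    refine ⟨fun t ht => ?_, hb.trans hL⟩
    have := phi_lower (a := a) (v := vL) ht.1
    have h2 : 0 ≤ vL - t := by
      have : 0 < (b-a)/T := by positivity
      linarith [ht.2]
    nlinarith [mul_nonneg h2 ht.1, ha.1]
  have hne : (NA a T).Nonempty := ⟨vL, hLm⟩
  have hbd : BddBelow (NA a T) := ⟨0, fun v hv => (NA_pos hT ha hv).1.le⟩
  have hmem := (NA_closed hT ha).csInf_mem hne hbd
  set v0 := sInf (NA a T) with hv0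
  have h0L : v0 ≤ vL := csInf_le hbd hLm
  have hg0 : phi a v0 T ≤ b := by
    by_contra hh
    push Not at hh
    have h1 := tube_v hT hmem.1
    have h2 : ∀ᶠ z in 𝓝 v0, b < phi a z T := (g_cont a T).continuousAt.eventually (lt_mem_nhds hh)
    have h3 := (h1.and h2).filter_mono (nhdsWithin_le_nhds (s := Iio v0))
    obtain ⟨z, ⟨hz1, hz2⟩, hz3⟩ := (h3.and self_mem_nhdsWithin).exists
    have : v0 ≤ z := csInf_le hbd ⟨hz1, by linarith⟩
    exact absurd hz3 (not_lt.2 this)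
  obtain ⟨v, hv, hvb⟩ := intermediate_value_Icc h0L (g_cont a T).continuousOn ⟨hg0, hL⟩
  exact ⟨v, hvb, (NA_up hT ha hmem hv).1⟩

lemma N_unique {a b T v1 v2 : ℝ} (hT : 0 < T) (ha : a ∈ Icc (-1:ℝ) 1) (hb : π - 1 ≤ b)
    (e1 : phi a v1 T = b) (e2 : phi a v2 T = b) (m1 : ∀ t ∈ Icc 0 T, -2 < phi a v1 t)
    (m2 : ∀ t ∈ Icc 0 T, -2 < phi a v2 t) : v1 = v2 := by
  wlog h : v1 < v2 generalizing v1 v2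
  · rcases eq_or_lt_of_le (not_lt.1 h) with h' | h'
    · exact h'.symm
    · exact (this e2 e1 m2 m1 h').symm
  have := g_strict (a := a) (T := T) h (fun v hv' =>
    (NA_pos hT ha (NA_up hT ha ⟨m1, by rw [e1]; exact hb⟩ hv')).2)
  linarith


lemma ift_scalar {E : Type*} [NormedAddCommGroup E] [NormedSpace ℝ E] [CompleteSpace E] {f : E × ℝ → ℝ}
    {x0 : E} {y0 d : ℝ} (cd : ContDiffAt ℝ (⊤ : ℕ∞) f (x0, y0)) (hd : HasDerivAt (fun y => f (x0, y)) d y0) (hd0 : d ≠ 0) :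
    ∃ ψ : E → ℝ, ContDiffAt ℝ (⊤ : ℕ∞) ψ x0 ∧ ψ x0 = y0 ∧ ∀ᶠ x in 𝓝 x0, f (x, ψ x) = f (x0, y0) := by
  have hdf : HasFDerivAt f (fderiv ℝ f (x0, y0)) (x0, y0) := (cd.differentiableAt (by simp)).hasFDerivAt
  have h1 : HasDerivAt (fun y : ℝ => ((x0, y) : E × ℝ)) ((0 : E), (1:ℝ)) y0 :=
    (hasDerivAt_const y0 x0).prodMk (hasDerivAt_id y0)
  have h2 := hdf.comp_hasDerivAt y0 h1
  have h3 : fderiv ℝ f (x0, y0) ((0 : E), (1:ℝ)) = d := h2.unique hd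
  have inv : (fderiv ℝ f (x0, y0) ∘L .inr ℝ E ℝ).IsInvertible := by
    refine ⟨ContinuousLinearEquiv.unitsEquivAut ℝ (Units.mk0 d hd0), ?_⟩
    ext
    simp [h3]
  exact ⟨cd.implicitFunction (by simp) inv, cd.contDiffAt_implicitFunction (by simp) inv,
    cd.implicitFunction_apply_self (by simp) inv, cd.eventually_apply_implicitFunction (by simp) inv⟩

def Adm (κ : Bool) (a b : ℝ) : Prop :=
  (κ = true → a ∈ Icc (-1:ℝ) 1 ∧ π - 1 ≤ b) ∧
  (κ = false → a < b ∧ ∃ k : ℤ, a ≤ (2*k+1)*π ∧ (2*k+1)*π ≤ b)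

def Good (κ : Bool) (a b T v : ℝ) : Prop :=
  phi a v T = b ∧ (κ = true → ∀ t ∈ Icc 0 T, -2 < phi a v t)

lemma Adm_lt {κ : Bool} {a b : ℝ} (h : Adm κ a b) : a < b := by
  cases κ
  · exact (h.2 rfl).1
  · have := h.1 rfl
    linarith [this.1.2, pi_gt_three]

lemma good_exists {κ : Bool} {a b T : ℝ} (h : Adm κ a b) (hT : 0 < T) : ∃ v, Good κ a b T v := by
  cases κ
  · obtain ⟨h1, k, h2, h3⟩ := h.2 rfl
    obtain ⟨v, hv⟩ := P_exists hT h1 k h2 h3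
    exact ⟨v, hv, by simp⟩
  · obtain ⟨h1, h2⟩ := h.1 rfl
    obtain ⟨v, hv, hv2⟩ := N_exists hT h1 h2
    exact ⟨v, hv, fun _ => hv2⟩

lemma good_unique {κ : Bool} {a b T v1 v2 : ℝ} (h : Adm κ a b) (hT : 0 < T) (g1 : Good κ a b T v1)
    (g2 : Good κ a b T v2) : v1 = v2 := by
  cases κ
  · obtain ⟨h1, k, h2, h3⟩ := h.2 rfl
    exact P_unique hT h1 k h2 h3 g1.1 g2.1
  · obtain ⟨h1, h2⟩ := h.1 rfl
    exact N_unique hT h1 h2 g1.1 g2.1 (g1.2 rfl) (g2.2 rfl)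

lemma good_D {κ : Bool} {a b T v : ℝ} (h : Adm κ a b) (hT : 0 < T) (g : Good κ a b T v) :
    0 < v ∧ 0 < yy a v T ∧ (0 < v^2/2 - cos a - 1 → 2 * (v^2/2 - cos a - 1) ≤ T * (v * psi a v T / yy a v T)) ∧
    (v^2/2 - cos a - 1 ≤ 0 → 2 * (v^2/2 - cos a - 1) - 2/3 < T * (v * psi a v T / yy a v T)) := by
  have hlt : a < phi a v T := by rw [g.1]; exact Adm_lt h
  rcases le_or_gt (v^2/2 - cos a - 1) 0 with hE | hE
  · cases κ
    · obtain ⟨h1, k, h2, h3⟩ := h.2 rfl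
      have := P_epos hT hlt k h2 (by rw [g.1]; exact h3)
      linarith
    · obtain ⟨h1, h2⟩ := h.1 rfl
      have := N_nonpos hT h1 (by rw [g.1]; exact h2) (g.2 rfl) hE
      exact ⟨this.1, this.2.1, fun hh => by linarith, fun _ => this.2.2.1⟩
  · have hv := epos_v hE hT.le hlt
    have := epos_D hE hT hv
    exact ⟨hv, this.1, fun _ => this.2, fun hh => by linarith⟩

lemma good_confP {a b T v : ℝ} (h : Adm false a b) (hT : 0 < T) (g : phi a v T = b) :
    ∀ t ∈ Icc 0 T, phi a v t ∈ Icc a b := by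
  obtain ⟨h1, k, h2, h3⟩ := h.2 rfl
  have hE := P_epos hT (by rw [g]; exact h1) k h2 (by rw [g]; exact h3)
  have hv := epos_v hE hT.le (by rw [g]; exact h1)
  intro t ht
  have m1 := phi_mono (a := a) (v := v) ht.1 (fun r hr => (epos_psi hE hv r hr.1).le)
  have m2 := phi_mono (a := a) (v := v) ht.2 (fun r hr => (epos_psi hE hv r (ht.1.trans hr.1)).le)
  rw [phi_zero] at m1
  rw [g] at m2
  exact ⟨m1, m2⟩

lemma good_confN {a b T v : ℝ} (h : Adm true a b) (hT : 0 < T) (g : Good true a b T v) :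
    ∀ t ∈ Icc 0 T, phi a v t ∈ Icc a (max b π) := by
  obtain ⟨h1, h2⟩ := h.1 rfl
  intro t ht
  rcases le_or_gt (v^2/2 - cos a - 1) 0 with hE | hE
  · have := (N_nonpos hT h1 (by rw [g.1]; exact h2) (g.2 rfl) hE).2.2.2 t ht
    exact ⟨this.1, this.2.le.trans (le_max_right _ _)⟩
  · have hv := epos_v hE hT.le (by rw [g.1]; exact Adm_lt h)
    have m1 := phi_mono (a := a) (v := v) ht.1 (fun r hr => (epos_psi hE hv r hr.1).le)
    have m2 := phi_mono (a := a) (v := v) ht.2 (fun r hr => (epos_psi hE hv r (ht.1.trans hr.1)).le)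
    rw [phi_zero] at m1
    rw [g.1] at m2
    exact ⟨m1, m2.trans (le_max_left _ _)⟩

open Classical in
noncomputable def vs (κ : Bool) (a b T : ℝ) : ℝ := if h : ∃ v, Good κ a b T v then h.choose else 0

lemma vs_good {κ : Bool} {a b T : ℝ} (h : Adm κ a b) (hT : 0 < T) : Good κ a b T (vs κ a b T) := by
  have := good_exists h hT
  rw [vs, dif_pos this]
  exact this.choose_spec

lemma vs_eq {κ : Bool} {a b T v : ℝ} (h : Adm κ a b) (hT : 0 < T) (g : Good κ a b T v) : v = vs κ a b T :=
  good_unique h hT g (vs_good h hT)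

noncomputable def ee (κ : Bool) (a b T : ℝ) : ℝ := (vs κ a b T)^2/2 - cos a - 1

lemma phi_chain {a T n' : ℝ} {n : ℝ → ℝ} (hn : HasDerivAt n n' T) :
    HasDerivAt (fun t => phi a (n t) t) (yy a (n T) T * n' + psi a (n T) T) T := by
  have hd : Differentiable ℝ (fun p : ℝ × ℝ × ℝ => phi p.1 p.2.1 p.2.2) := phi_contDiff.differentiable (by simp)
  have hL := (hd (a, n T, T)).hasFDerivAt
  set L := fderiv ℝ (fun p : ℝ × ℝ × ℝ => phi p.1 p.2.1 p.2.2) (a, n T, T) with hLd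
  have e1 : L ((0:ℝ), (1:ℝ), (0:ℝ)) = yy a (n T) T := by
    have hc : HasDerivAt (fun v : ℝ => ((a, v, T) : ℝ × ℝ × ℝ)) ((0:ℝ), (1:ℝ), (0:ℝ)) (n T) :=
      (hasDerivAt_const _ a).prodMk ((hasDerivAt_id _).prodMk (hasDerivAt_const _ T))
    have h := HasFDerivAt.comp_hasDerivAt (n T) hL hc
    exact HasDerivAt.unique (f := fun v : ℝ => phi a v T) h (phi_dv a (n T) T)
  have e2 : L ((0:ℝ), (0:ℝ), (1:ℝ)) = psi a (n T) T := by
    have hc : HasDerivAt (fun t : ℝ => ((a, n T, t) : ℝ × ℝ × ℝ)) ((0:ℝ), (0:ℝ), (1:ℝ)) T :=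
      (hasDerivAt_const _ a).prodMk ((hasDerivAt_const _ (n T)).prodMk (hasDerivAt_id _))
    have h := HasFDerivAt.comp_hasDerivAt T hL hc
    exact HasDerivAt.unique (f := fun t : ℝ => phi a (n T) t) h (phi_deriv a (n T) T)
  have hc : HasDerivAt (fun t : ℝ => ((a, n t, t) : ℝ × ℝ × ℝ)) ((0:ℝ), n', (1:ℝ)) T :=
    (hasDerivAt_const _ a).prodMk (hn.prodMk (hasDerivAt_id _))
  refine (hL.comp_hasDerivAt T hc).congr_deriv ?_
  have : ((0:ℝ), n', (1:ℝ)) = n' • ((0:ℝ), (1:ℝ), (0:ℝ)) + ((0:ℝ), (0:ℝ), (1:ℝ)) := by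
    ext <;> simp
  rw [this, map_add, map_smul, e1, e2, smul_eq_mul]
  ring

lemma nu_exists {κ : Bool} {a b T : ℝ} (h : Adm κ a b) (hT : 0 < T) :
    ∃ ν : ℝ × ℝ × ℝ → ℝ, ContDiffAt ℝ (⊤ : ℕ∞) ν (a, b, T) ∧ ν (a, b, T) = vs κ a b T ∧
      (∀ᶠ p in 𝓝 (a, b, T), 0 < p.2.2 → Adm κ p.1 p.2.1 → ν p = vs κ p.1 p.2.1 p.2.2) ∧
      HasDerivAt (fun t => ν (a, b, t)) (- psi a (vs κ a b T) T / yy a (vs κ a b T) T) T := by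
  have hg := vs_good h hT
  set v := vs κ a b T with hv
  have hD := good_D h hT hg
  have cd : ContDiff ℝ (⊤ : ℕ∞) (fun z : (ℝ × ℝ × ℝ) × ℝ => phi z.1.1 z.2 z.1.2.2 - z.1.2.1) := by
    refine ContDiff.sub ?_ (by fun_prop)
    exact phi_contDiff.comp (f := fun z : (ℝ × ℝ × ℝ) × ℝ => (z.1.1, z.2, z.1.2.2)) (by fun_prop)
  obtain ⟨ν, n1, n2, n3⟩ := ift_scalar (x0 := (a, b, T)) (y0 := v) cd.contDiffAt
    ((phi_dv a v T).sub_const b) hD.2.1.ne'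
  simp only [hg.1, sub_self] at n3
  refine ⟨ν, n1, n2, ?_, ?_⟩
  · have hcont : ContinuousAt (fun p : ℝ × ℝ × ℝ => ((p.1, ν p, p.2.2) : ℝ × ℝ × ℝ)) (a, b, T) :=
      continuousAt_fst.prodMk (n1.continuousAt.prodMk (by fun_prop))
    cases κ
    · filter_upwards [n3] with p hp h0 hA
      exact vs_eq hA h0 ⟨by linarith, by simp⟩
    · have ht := tube hT (hg.2 rfl)
      have htt : ∀ᶠ p in 𝓝 (a, b, T), ∀ t ∈ Icc 0 p.2.2, -2 < phi p.1 (ν p) t := by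
        have : Tendsto (fun p : ℝ × ℝ × ℝ => ((p.1, ν p, p.2.2) : ℝ × ℝ × ℝ)) (𝓝 (a, b, T)) (𝓝 (a, v, T)) := by
          have := hcont.tendsto
          simp only [n2] at this
          exact this
        exact this.eventually ht
      filter_upwards [n3, htt] with p hp hq h0 hA
      exact vs_eq hA h0 ⟨by linarith, fun _ => hq⟩
  · have hc : ContinuousAt (fun t : ℝ => ((a, b, t) : ℝ × ℝ × ℝ)) T := by fun_prop
    have hcd : ContDiffAt ℝ (⊤ : ℕ∞) (fun t : ℝ => ((a, b, t) : ℝ × ℝ × ℝ)) T := by fun_prop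
    have hn : DifferentiableAt ℝ (fun t => ν (a, b, t)) T :=
      ((n1.comp T hcd).differentiableAt (by simp))
    have hn' := hn.hasDerivAt
    set n' := deriv (fun t => ν (a, b, t)) T
    have h1 := phi_chain (a := a) hn'
    have h2 : (fun t => phi a (ν (a, b, t)) t) =ᶠ[𝓝 T] fun _ => b := by
      have := hc.eventually n3
      filter_upwards [this] with t ht
      linarith
    have h3 := h1.unique ((hasDerivAt_const T b).congr_of_eventuallyEq h2)
    simp only [n2] at h3
    refine hn'.congr_deriv ?_
    rw [eq_div_iff hD.2.1.ne']
    linarith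


lemma root_unique {f f' : ℝ → ℝ} (hf : ∀ T, 0 < T → HasDerivAt f (f' T) T)
    (hneg : ∀ T, 0 < T → f T = 1 → f' T < 0) {T1 T2 : ℝ} (h1 : 0 < T1) (h12 : T1 < T2)
    (e1 : f T1 = 1) (e2 : f T2 = 1) : False := by
  have hle : ∀ x ∈ Icc T1 T2, f x ≤ 1 := by
    intro x hx
    exact image_le_of_deriv_right_lt_deriv_boundary (f := f) (f' := f') (a := T1) (b := T2) (B := fun _ => 1)
      (B' := fun _ => 0)
      (fun t ht => (hf t (h1.trans_le ht.1)).continuousAt.continuousWithinAt)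
      (fun t ht => (hf t (h1.trans_le ht.1)).hasDerivWithinAt) e1.le
      (fun t => hasDerivAt_const t 1) (fun t ht he => hneg t (h1.trans_le ht.1) he) hx
  have hT2 : 0 < T2 := h1.trans h12
  have hs := (hasDerivAt_iff_tendsto_slope.1 (hf T2 hT2)).mono_left
    (nhdsWithin_mono T2 (show Iio T2 ⊆ {T2}ᶜ from fun x hx => ne_of_lt hx))
  have h0 : 0 ≤ f' T2 := by
    refine ge_of_tendsto hs ?_
    filter_upwards [Ioo_mem_nhdsLT h12] with t ht
    rw [slope_def_field]
    apply div_nonneg_of_nonpos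
    · linarith [hle t ⟨ht.1.le, ht.2.le⟩]
    · linarith [ht.2]
  linarith [hneg T2 hT2 e2]

noncomputable def dd (κ : Bool) (a b T : ℝ) : ℝ :=
  vs κ a b T * psi a (vs κ a b T) T / yy a (vs κ a b T) T

lemma ee_deriv {κ : Bool} {a b T : ℝ} (h : Adm κ a b) (hT : 0 < T) :
    HasDerivAt (ee κ a b) (- dd κ a b T) T := by
  obtain ⟨ν, n1, n2, n3, n4⟩ := nu_exists h hT
  have h1 : HasDerivAt (fun t => (ν (a, b, t))^2/2 - cos a - 1) (- dd κ a b T) T := by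
    refine ((((n4.pow 2).div_const 2).sub_const (cos a)).sub_const 1).congr_deriv ?_
    rw [n2, dd]
    push_cast
    ring
  refine h1.congr_of_eventuallyEq ?_
  have hc : ContinuousAt (fun t : ℝ => ((a, b, t) : ℝ × ℝ × ℝ)) T := by fun_prop
  filter_upwards [hc.eventually n3, lt_mem_nhds hT] with t ht h0
  rw [ee, ht h0 h]

lemma sum_dd {κ : Fin 4 → Bool} {a b : Fin 4 → ℝ} {T : ℝ} (h : ∀ i, Adm (κ i) (a i) (b i)) (hT : 0 < T)
    (hs : ∑ i, ee (κ i) (a i) (b i) T = 1) : 0 < ∑ i, dd (κ i) (a i) (b i) T := by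
  have hD := fun i => good_D (h i) hT (vs_good (h i) hT)
  have hD1 : ∀ i, 0 < ee (κ i) (a i) (b i) T → 2 * ee (κ i) (a i) (b i) T ≤ T * dd (κ i) (a i) (b i) T :=
    fun i => (hD i).2.2.1
  have hD2 : ∀ i, ee (κ i) (a i) (b i) T ≤ 0 → 2 * ee (κ i) (a i) (b i) T - 2/3 < T * dd (κ i) (a i) (b i) T :=
    fun i => (hD i).2.2.2
  have hpos : 0 < T * ∑ i, dd (κ i) (a i) (b i) T := by
    rw [Fin.sum_univ_four] at hs ⊢
    have x0 := hD1 0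
    have x1 := hD1 1
    have x2 := hD1 2
    have x3 := hD1 3
    have y0 := hD2 0
    have y1 := hD2 1
    have y2 := hD2 2
    have y3 := hD2 3
    rcases le_or_gt (ee (κ 0) (a 0) (b 0) T) 0 with h0 | h0 <;>
    rcases le_or_gt (ee (κ 1) (a 1) (b 1) T) 0 with h1 | h1 <;>
    rcases le_or_gt (ee (κ 2) (a 2) (b 2) T) 0 with h2 | h2 <;>
    rcases le_or_gt (ee (κ 3) (a 3) (b 3) T) 0 with h3 | h3 <;>
    first
    | (exfalso; linarith)
    | (simp only [h0, h1, h2, h3, forall_const] at x0 x1 x2 x3 y0 y1 y2 y3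
       linarith)
  exact (mul_pos_iff_of_pos_left hT).1 hpos

lemma ee_bds {κ : Bool} {a b T : ℝ} (h : Adm κ a b) (hT : 0 < T) :
    (b - a)^2/(2*T^2) - 2 ≤ ee κ a b T ∧ ee κ a b T ≤ (b - a)^2/(2*T^2) := by
  have := energy_bds (a := a) (v := vs κ a b T) hT
  rw [(vs_good h hT).1] at this
  exact this

lemma root_exists {κ : Fin 4 → Bool} {a b : Fin 4 → ℝ} (h : ∀ i, Adm (κ i) (a i) (b i)) :
    ∃ T, 0 < T ∧ ∑ i, ee (κ i) (a i) (b i) T = 1 := by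
  set M := ∑ i, (b i - a i)^2 with hM
  have hMp : 0 < M := Finset.sum_pos (fun i _ => pow_pos (sub_pos.2 (Adm_lt (h i))) 2) ⟨0, by simp⟩
  have hq : 0 < √M := Real.sqrt_pos.2 hMp
  have hsq : √M ^ 2 = M := Real.sq_sqrt hMp.le
  have hsum : ∀ T, 0 < T → M/(2*T^2) - 8 ≤ ∑ i, ee (κ i) (a i) (b i) T ∧
      ∑ i, ee (κ i) (a i) (b i) T ≤ M/(2*T^2) := by
    intro T hT
    have hb := fun i => ee_bds (h i) hT
    rw [hM, Finset.sum_div, Fin.sum_univ_four, Fin.sum_univ_four]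
    constructor
    · linarith [(hb 0).1, (hb 1).1, (hb 2).1, (hb 3).1]
    · linarith [(hb 0).2, (hb 1).2, (hb 2).2, (hb 3).2]
  have hcont : ContinuousOn (fun T => ∑ i, ee (κ i) (a i) (b i) T) (Icc (√M/5) (√M)) := by
    intro t ht
    have ht0 : 0 < t := lt_of_lt_of_le (by positivity) ht.1
    exact (HasDerivAt.fun_sum (fun i _ => ee_deriv (h i) ht0)).continuousAt.continuousWithinAt
  have l1 := (hsum (√M/5) (by positivity)).1
  have l2 := (hsum (√M) hq).2
  have e1 : M/(2*(√M/5)^2) = 25/2 := by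
    rw [div_pow, hsq]; field_simp; norm_num
  have e2 : M/(2*(√M)^2) = 1/2 := by
    rw [hsq]; field_simp
  rw [e1] at l1
  rw [e2] at l2
  obtain ⟨T, hT, hT1⟩ := intermediate_value_Icc' (by linarith) hcont (show (1:ℝ) ∈ Icc _ _ from ⟨by linarith, by linarith⟩)
  exact ⟨T, lt_of_lt_of_le (by positivity) hT.1, hT1⟩

lemma assemble {P : Type*} [NormedAddCommGroup P] [NormedSpace ℝ P] [CompleteSpace P] (κ : Fin 4 → Bool)
    (A B : P → Fin 4 → ℝ) (hA : ∀ i, ContDiff ℝ (⊤ : ℕ∞) (fun p => A p i))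
    (hB : ∀ i, ContDiff ℝ (⊤ : ℕ∞) (fun p => B p i)) :
    ∃ τ : P → ℝ, ContDiffOn ℝ (⊤ : ℕ∞) τ {p | ∀ i, Adm (κ i) (A p i) (B p i)} ∧
      ∀ p, (∀ i, Adm (κ i) (A p i) (B p i)) → 0 < τ p ∧
        ∀ T, 0 < T → (∑ i, ee (κ i) (A p i) (B p i) T = 1 ↔ T = τ p) := by
  classical
  have hex : ∀ p, ∃ t : ℝ, (∀ i, Adm (κ i) (A p i) (B p i)) → 0 < t ∧ ∑ i, ee (κ i) (A p i) (B p i) t = 1 := by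
    intro p
    by_cases hp : ∀ i, Adm (κ i) (A p i) (B p i)
    · obtain ⟨t, ht⟩ := root_exists hp
      exact ⟨t, fun _ => ht⟩
    · exact ⟨0, fun hh => absurd hh hp⟩
  choose τ hτ using hex
  have huniq : ∀ p, (∀ i, Adm (κ i) (A p i) (B p i)) → ∀ T, 0 < T →
      ∑ i, ee (κ i) (A p i) (B p i) T = 1 → T = τ p := by
    intro p hp T hT hT1
    have hd : ∀ s, 0 < s → HasDerivAt (fun T => ∑ i, ee (κ i) (A p i) (B p i) T)
        (∑ i, - dd (κ i) (A p i) (B p i) s) s :=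
      fun s hs => HasDerivAt.fun_sum (fun i _ => ee_deriv (hp i) hs)
    have hn : ∀ s, 0 < s → ∑ i, ee (κ i) (A p i) (B p i) s = 1 → ∑ i, - dd (κ i) (A p i) (B p i) s < 0 := by
      intro s hs h1
      rw [Finset.sum_neg_distrib]
      linarith [sum_dd hp hs h1]
    rcases lt_trichotomy T (τ p) with hl | hl | hl
    · exact (root_unique hd hn hT hl hT1 (hτ p hp).2).elim
    · exact hl
    · exact (root_unique hd hn (hτ p hp).1 hl (hτ p hp).2 hT1).elim
  refine ⟨τ, ?_, fun p hp => ⟨(hτ p hp).1, fun T hT => ⟨huniq p hp T hT, fun h => h ▸ (hτ p hp).2⟩⟩⟩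
  intro p0 hp0
  have hp0' : ∀ i, Adm (κ i) (A p0 i) (B p0 i) := hp0
  obtain ⟨ht0, ht1⟩ := hτ p0 hp0'
  have hν := fun i => nu_exists (hp0' i) ht0
  choose ν n1 n2 n3 n4 using hν
  have hin : ∀ i, ContDiffAt ℝ (⊤ : ℕ∞) (fun z : P × ℝ => ((A z.1 i, B z.1 i, z.2) : ℝ × ℝ × ℝ)) (p0, τ p0) := by
    intro i
    have a1 : ContDiff ℝ (⊤ : ℕ∞) (fun z : P × ℝ => A z.1 i) := (hA i).comp contDiff_fst
    have b1 : ContDiff ℝ (⊤ : ℕ∞) (fun z : P × ℝ => B z.1 i) := (hB i).comp contDiff_fst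
    exact (a1.prodMk (b1.prodMk contDiff_snd)).contDiffAt
  have hnu : ∀ i, ContDiffAt ℝ (⊤ : ℕ∞) (fun z : P × ℝ => ν i (A z.1 i, B z.1 i, z.2)) (p0, τ p0) :=
    fun i => ContDiffAt.comp (p0, τ p0) (g := ν i) (n1 i) (hin i)
  have hG : ContDiffAt ℝ (⊤ : ℕ∞) (fun z : P × ℝ => ∑ i, ((ν i (A z.1 i, B z.1 i, z.2))^2/2 - cos (A z.1 i) - 1))
      (p0, τ p0) := by
    refine ContDiffAt.sum (fun i _ => ?_)
    refine ContDiffAt.sub (ContDiffAt.sub (((hnu i).pow 2).div_const 2) ?_) contDiffAt_const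
    have a1 : ContDiff ℝ (⊤ : ℕ∞) (fun z : P × ℝ => A z.1 i) := (hA i).comp contDiff_fst
    exact (Real.contDiff_cos.comp a1).contDiffAt
  have hGd : HasDerivAt (fun t : ℝ => ∑ i, ((ν i (A p0 i, B p0 i, t))^2/2 - cos (A p0 i) - 1))
      (∑ i, - dd (κ i) (A p0 i) (B p0 i) (τ p0)) (τ p0) := by
    refine HasDerivAt.fun_sum (fun i _ => ?_)
    refine (((((n4 i).pow 2).div_const 2).sub_const (cos (A p0 i))).sub_const 1).congr_deriv ?_
    rw [n2, dd]
    push_cast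
    ring
  have hne : ∑ i, - dd (κ i) (A p0 i) (B p0 i) (τ p0) ≠ 0 := by
    rw [Finset.sum_neg_distrib]
    exact neg_ne_zero.2 (sum_dd hp0' ht0 ht1).ne'
  obtain ⟨ψ, s1, s2, s3⟩ := ift_scalar hG hGd hne
  refine (s1.contDiffWithinAt).congr_of_eventuallyEq ?_ s2.symm
  have hpair : Tendsto (fun p => ((p, ψ p) : P × ℝ)) (𝓝 p0) (𝓝 (p0, τ p0)) := by
    have := (continuousAt_id (x := p0)).prodMk s1.continuousAt
    have h2 := this.tendsto
    simp only [s2, id] at h2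
    exact h2
  have hall : ∀ᶠ p in 𝓝 p0, ∀ i, 0 < ψ p → Adm (κ i) (A p i) (B p i) →
      ν i (A p i, B p i, ψ p) = vs (κ i) (A p i) (B p i) (ψ p) := by
    rw [eventually_all]
    intro i
    exact hpair.eventually ((hin i).continuousAt.eventually (n3 i))
  have hpos : ∀ᶠ p in 𝓝 p0, 0 < ψ p := s1.continuousAt.eventually (lt_mem_nhds (by rw [s2]; exact ht0))
  filter_upwards [nhdsWithin_le_nhds s3, nhdsWithin_le_nhds hall, nhdsWithin_le_nhds hpos, self_mem_nhdsWithin]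
    with p g1 g2 g3 g4
  refine (huniq p g4 (ψ p) g3 ?_).symm
  calc ∑ i, ee (κ i) (A p i) (B p i) (ψ p) = ∑ i, ((ν i (A p i, B p i, ψ p))^2/2 - cos (A p i) - 1) :=
        Finset.sum_congr rfl (fun i _ => by rw [ee, g2 i g3 (g4 i)])
    _ = ∑ i, ((ν i (A p0 i, B p0 i, τ p0))^2/2 - cos (A p0 i) - 1) := g1
    _ = ∑ i, ee (κ i) (A p0 i) (B p0 i) (τ p0) := Finset.sum_congr rfl (fun i _ => by rw [ee, n2])
    _ = 1 := ht1


def kap (k : Fin 4) : Bool := if k = 0 then true else if k = 1 then true else false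
noncomputable def aa (k : Fin 4) (α β : ℝ) : ℝ := if k = 1 then -β else α
noncomputable def bb (k : Fin 4) (α β : ℝ) : ℝ := if k = 1 then -α else β

def Conf (k : Fin 4) (α β T : ℝ) (x w : ℝ → ℝ) : Prop :=
  IsPendSolOn x w (Icc 0 T) ∧ x 0 = α ∧ x T = β ∧ ∀ t ∈ Icc 0 T, x t ∈ ConfineSet k α β

lemma fin4_cases (k : Fin 4) : k = 0 ∨ k = 1 ∨ k = 2 ∨ k = 3 := by
  fin_cases k <;> simp

lemma adm_of {k : Fin 4} {α β : ℝ} (h : AdmissCase k α β) : Adm (kap k) (aa k α β) (bb k α β) := by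
  have hpi := pi_gt_three
  rcases fin4_cases k with rfl | rfl | rfl | rfl
  · simp only [AdmissCase, kap, aa, bb, if_true, show ¬ ((0:Fin 4) = 1) by decide, if_false, abs_le, abs_lt] at h ⊢
    exact ⟨fun _ => ⟨⟨by linarith, by linarith⟩, by linarith⟩, by simp⟩
  · simp only [AdmissCase, kap, aa, bb, if_true, show ¬ ((1:Fin 4) = 0) by decide, if_false, abs_le, abs_lt] at h ⊢
    exact ⟨fun _ => ⟨⟨by linarith, by linarith⟩, by linarith⟩, by simp⟩
  · simp only [AdmissCase, kap, aa, bb, if_true, show ¬ ((2:Fin 4) = 0) by decide,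
      show ¬ ((2:Fin 4) = 1) by decide, if_false, abs_le, abs_lt] at h ⊢
    refine ⟨by simp, fun _ => ⟨by linarith, 0, ?_, ?_⟩⟩
    · push_cast; linarith
    · push_cast; linarith
  · simp only [AdmissCase, kap, aa, bb, show ¬ ((3:Fin 4) = 0) by decide,
      show ¬ ((3:Fin 4) = 1) by decide, show ¬ ((3:Fin 4) = 2) by decide, if_false] at h ⊢
    refine ⟨by simp, fun _ => ⟨by linarith, ⌈(α/π - 1)/2⌉, ?_, ?_⟩⟩
    · have := Int.le_ceil ((α/π - 1)/2)
      have h2 : α/π ≤ 2 * (⌈(α/π - 1)/2⌉ : ℝ) + 1 := by linarith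
      rwa [div_le_iff₀ pi_pos] at h2
    · have := Int.ceil_lt_add_one ((α/π - 1)/2)
      have h2 : 2 * (⌈(α/π - 1)/2⌉ : ℝ) + 1 ≤ α/π + 2 := by linarith
      have h3 := mul_le_mul_of_nonneg_right h2 pi_pos.le
      have h4 : (α/π + 2) * π = α + 2*π := by field_simp
      linarith

lemma sol_vs {κ : Bool} {a b T : ℝ} {x w : ℝ → ℝ} (h : Adm κ a b) (hT : 0 < T)
    (hs : IsPendSolOn x w (Icc 0 T)) (h0 : x 0 = a) (h1 : x T = b)
    (hc : κ = true → ∀ t ∈ Icc 0 T, -2 < x t) :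
    ∀ t ∈ Icc 0 T, x t = phi a (vs κ a b T) t ∧ w t = psi a (vs κ a b T) t := by
  have hu := fun t (ht : t ∈ Icc 0 T) => pend_unique hs ht
  rw [h0] at hu
  have g : Good κ a b T (w 0) := by
    refine ⟨?_, fun hk t ht => ?_⟩
    · rw [← (hu T ⟨hT.le, le_rfl⟩).1, h1]
    · rw [← (hu t ht).1]; exact hc hk t ht
  rw [← vs_eq h hT g]
  exact hu

lemma rev_sol {x w : ℝ → ℝ} {T : ℝ} (hs : IsPendSolOn x w (Icc 0 T)) :
    IsPendSolOn (fun t => - x (T - t)) (fun t => w (T - t)) (Icc 0 T) := by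
  intro t ht
  have := hs (T - t) ⟨by linarith [ht.2], by linarith [ht.1]⟩
  have hd : HasDerivAt (fun t : ℝ => T - t) (-1) t := (hasDerivAt_id t).const_sub T
  refine ⟨((this.1.comp t hd).neg).congr_deriv (by ring), (this.2.comp t hd).congr_deriv ?_⟩
  simp

lemma comp_exists {k : Fin 4} {α β T : ℝ} (h : AdmissCase k α β) (hT : 0 < T) :
    ∃ x w, Conf k α β T x w := by
  have hA := adm_of h
  have hg := vs_good hA hT
  have hpi := pi_gt_three
  set v := vs (kap k) (aa k α β) (bb k α β) T
  rcases fin4_cases k with rfl | rfl | rfl | rfl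
  · have hc := good_confN hA hT hg
    refine ⟨phi α v, psi α v, phi_pend _ _ _, phi_zero _ _, hg.1, ?_⟩
    intro t ht
    have h3 : phi α v t ∈ Icc α (max β π) := hc t ht
    simpa [ConfineSet] using h3
  · have hc := good_confN hA hT hg
    have hg1 : phi (-β) v T = -α := hg.1
    refine ⟨fun t => - phi (-β) v (T - t), fun t => psi (-β) v (T - t), rev_sol (phi_pend _ _ _), ?_, ?_, ?_⟩
    · simp [hg1]
    · simp [phi_zero]
    · intro t ht
      have := hc (T - t) ⟨by linarith [ht.2], by linarith [ht.1]⟩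
      have h3 : -β ≤ phi (-β) v (T - t) := this.1
      have h4 : phi (-β) v (T - t) ≤ max (-α) π := this.2
      simp only [AdmissCase, if_true, show ¬ ((1:Fin 4) = 0) by decide, if_false, abs_le] at h
      simp only [ConfineSet, if_true, show ¬ ((1:Fin 4) = 0) by decide, if_false]
      have h5 : max (-α) π ≤ 1 + π := max_le (by linarith) (by linarith)
      constructor <;> linarith
  · have hc := good_confP hA hT hg.1
    refine ⟨phi α v, psi α v, phi_pend _ _ _, phi_zero _ _, hg.1, ?_⟩
    intro t ht
    have h3 : α ≤ phi α v t := (hc t ht).1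
    have h4 : phi α v t ≤ β := (hc t ht).2
    simp only [AdmissCase, if_true, show ¬ ((2:Fin 4) = 0) by decide, show ¬ ((2:Fin 4) = 1) by decide, if_false, abs_le] at h
    simp only [ConfineSet, if_true, show ¬ ((2:Fin 4) = 0) by decide, show ¬ ((2:Fin 4) = 1) by decide, if_false]
    constructor <;> linarith
  · have hc := good_confP hA hT hg.1
    refine ⟨phi α v, psi α v, phi_pend _ _ _, phi_zero _ _, hg.1, ?_⟩
    intro t ht
    have h3 : phi α v t ∈ Icc α β := hc t ht
    simpa [ConfineSet] using h3

lemma comp_unique {k : Fin 4} {α β T : ℝ} (h : AdmissCase k α β) (hT : 0 < T) :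
    ∃ z : ℝ → ℝ, ∀ x w, Conf k α β T x w → EqOn x z (Icc 0 T) ∧
      (w 0)^2/2 + Vpend (x 0) = ee (kap k) (aa k α β) (bb k α β) T := by
  have hA := adm_of h
  have hpi := pi_gt_three
  have h0T : (0:ℝ) ∈ Icc 0 T := ⟨le_rfl, hT.le⟩
  by_cases hk : k = 1
  · subst hk
    refine ⟨fun t => - phi (-β) (vs true (-β) (-α) T) (T - t), ?_⟩
    rintro x w ⟨hs, h0, h1, hc⟩
    simp only [ConfineSet, if_true, show ¬ ((1:Fin 4) = 0) by decide, if_false] at hc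
    have hu := sol_vs (κ := true) (a := -β) (b := -α) hA hT (rev_sol hs) (by simp [h1]) (by simp [h0]) (by
      intro _ t ht
      have := (hc (T - t) ⟨by linarith [ht.2], by linarith [ht.1]⟩).2
      linarith)
    constructor
    · intro t ht
      have := (hu (T - t) ⟨by linarith [ht.2], by linarith [ht.1]⟩).1
      simp only [sub_sub_cancel] at this
      simp only [← this, neg_neg]
    · have := hu T ⟨hT.le, le_rfl⟩
      simp only [sub_self] at this
      have he := energy_const (-β) (vs true (-β) (-α) T) T
      rw [← this.1, ← this.2, cos_neg] at he
      change _ = (vs true (-β) (-α) T)^2/2 - cos (-β) - 1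
      rw [Vpend]
      linarith
  · have ea : aa k α β = α := by simp [aa, hk]
    have eb : bb k α β = β := by simp [bb, hk]
    rw [ea, eb] at hA ⊢
    refine ⟨phi α (vs (kap k) α β T), ?_⟩
    rintro x w ⟨hs, h0, h1, hc⟩
    have hu := sol_vs hA hT hs h0 h1 (by
      intro hkk t ht
      have hk0 : k = 0 := by
        by_contra hne
        simp [kap, hne, hk] at hkk
      subst hk0
      have := hc t ht
      simp only [ConfineSet, if_true] at this
      have h3 := (hA.1 rfl).1.1
      linarith [this.1])
    refine ⟨fun t ht => (hu t ht).1, ?_⟩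
    have := (hu 0 h0T).2
    rw [psi_zero] at this
    rw [this, h0, Vpend, ee]
    ring


end PendProof

/-- **Corollary of the Pendulum Lemma.** For the uncoupled system of four pendula
`ẍᵢ + sin xᵢ = 0` and admissible boundary data `q, p ∈ ℝ⁴` (each coordinate pair
`(qᵢ, pᵢ)` in one of the admissible cases `c i`), for every `T > 0` there is a
unique suitably confined solution from `q` to `p` in time `T`; moreover there is a
unique `T* > 0` for which the total energy of this solution is `1`, and `T*`
depends smoothly on `(q, p)`. -/
theorem corollary_pendulum (c : Fin 4 → Fin 4) :
    ∃ Tstar : ((Fin 4 → ℝ) × (Fin 4 → ℝ)) → ℝ,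
      ContDiffOn ℝ (⊤ : ℕ∞) Tstar
        {qp : (Fin 4 → ℝ) × (Fin 4 → ℝ) | ∀ i, AdmissCase (c i) (qp.1 i) (qp.2 i)} ∧
      ∀ q p : Fin 4 → ℝ, (∀ i, AdmissCase (c i) (q i) (p i)) →
        (∀ T : ℝ, 0 < T →
          ∃ X W : Fin 4 → ℝ → ℝ,
            (∀ i, IsPendSolOn (X i) (W i) (Set.Icc 0 T) ∧ X i 0 = q i ∧ X i T = p i ∧
              ∀ t ∈ Set.Icc 0 T, X i t ∈ ConfineSet (c i) (q i) (p i)) ∧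
            ∀ Y U : Fin 4 → ℝ → ℝ,
              (∀ i, IsPendSolOn (Y i) (U i) (Set.Icc 0 T) ∧ Y i 0 = q i ∧ Y i T = p i ∧
                ∀ t ∈ Set.Icc 0 T, Y i t ∈ ConfineSet (c i) (q i) (p i)) →
              ∀ i, Set.EqOn (Y i) (X i) (Set.Icc 0 T)) ∧
        0 < Tstar (q, p) ∧
        (∀ T : ℝ, 0 < T → ∀ X W : Fin 4 → ℝ → ℝ,
          (∀ i, IsPendSolOn (X i) (W i) (Set.Icc 0 T) ∧ X i 0 = q i ∧ X i T = p i ∧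
            ∀ t ∈ Set.Icc 0 T, X i t ∈ ConfineSet (c i) (q i) (p i)) →
          ((∑ i, ((W i 0) ^ 2 / 2 + Vpend (X i 0))) = 1 ↔ T = Tstar (q, p))) := by
  obtain ⟨τ, hτ1, hτ2⟩ := assemble (P := (Fin 4 → ℝ) × (Fin 4 → ℝ)) (fun i => kap (c i))
    (fun z i => aa (c i) (z.1 i) (z.2 i)) (fun z i => bb (c i) (z.1 i) (z.2 i))
    (by
      intro i
      by_cases h : c i = 1
      · simp only [aa, h, if_true]; fun_prop
      · simp only [aa, h, if_false]; fun_prop)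
    (by
      intro i
      by_cases h : c i = 1
      · simp only [bb, h, if_true]; fun_prop
      · simp only [bb, h, if_false]; fun_prop)
  refine ⟨τ, hτ1.mono (fun z hz i => adm_of (hz i)), ?_⟩
  intro q p hqp
  obtain ⟨t1, t2⟩ := hτ2 (q, p) (fun i => adm_of (hqp i))
  refine ⟨?_, t1, ?_⟩
  · intro T hT
    have hex := fun i => comp_exists (hqp i) hT
    choose X W hXW using hex
    refine ⟨X, W, hXW, ?_⟩
    intro Y U hYU i t ht
    obtain ⟨z, hz⟩ := comp_unique (hqp i) hT
    rw [(hz _ _ (hYU i)).1 ht, (hz _ _ (hXW i)).1 ht]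
  · intro T hT X W hXW
    rw [← t2 T hT]
    have : ∀ i, (W i 0) ^ 2 / 2 + Vpend (X i 0) = ee (kap (c i)) (aa (c i) (q i) (p i)) (bb (c i) (q i) (p i)) T := by
      intro i
      obtain ⟨z, hz⟩ := comp_unique (hqp i) hT
      exact (hz _ _ (hXW i)).2
    rw [Finset.sum_congr rfl (fun i _ => this i)]
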